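/- arXiv:2410.19186 — 2 statements merged into one kernel-verified Lean document; each statement's English description precedes it below -/
import Mathlib

section
/- For every real number q with 0 < q < 1, the integral from 0 to q of (E(t)^5 / E(t^5)) · r(t)^5 · (1/t) dt equals r(q)^5. Moreover, with α = (1+√5)/2, one has r(e^{−2π/√5})^5 = √(α^{10}+1) − α^5. -/
open Real

/-- Euler's product `E(q) = ∏_{j=1}^∞ (1 - q^j)`. -/
noncomputable def eulerE (q : ℝ) : ℝ := ∏' j : ℕ, (1 - q ^ (j + 1))

/-- The Rogers–Ramanujan infinite product
`r(q) = q^{1/5} ∏_{j=1}^∞ (1-q^{5j-4})(1-q^{5j-1}) / ((1-q^{5j-3})(1-q^{5j-2}))`. -/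
noncomputable def rrProd (q : ℝ) : ℝ :=
  q ^ ((1 : ℝ) / 5) *
    ∏' j : ℕ, ((1 - q ^ (5 * j + 1)) * (1 - q ^ (5 * j + 4))) /
      ((1 - q ^ (5 * j + 2)) * (1 - q ^ (5 * j + 3)))

section RRconst
open UpperHalfPlane ModularForm ModularGroup SlashInvariantForm MatrixGroups

lemma rr_const_of_S {G : ℂ → ℂ} (hG : DifferentiableOn ℂ G (Metric.ball 0 1))
    (hS : ∀ τ : ℂ, 0 < τ.im → G (Complex.exp (2 * π * Complex.I * (-1 / τ))) =
      G (Complex.exp (2 * π * Complex.I * τ))) :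
    ∀ q ∈ Metric.ball (0:ℂ) 1, G q = G 0 := by
  have hq1 : ∀ τ : ℍ, Function.Periodic.qParam 1 (τ:ℂ) = Complex.exp (2 * π * Complex.I * τ) := by
    intro τ; simp [Function.Periodic.qParam]
  have hS' : ((fun z : ℍ => G (Complex.exp (2 * π * Complex.I * z))) ∣[(0:ℤ)] S)
      = (fun z : ℍ => G (Complex.exp (2 * π * Complex.I * z))) := by
    ext z
    rw [SL_slash_apply, UpperHalfPlane.modular_S_smul]
    have := hS z z.2
    simpa [neg_div] using this
  have hT' : ((fun z : ℍ => G (Complex.exp (2 * π * Complex.I * z))) ∣[(0:ℤ)] T)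
      = (fun z : ℍ => G (Complex.exp (2 * π * Complex.I * z))) := by
    ext z
    rw [SL_slash_apply, modular_T_smul]
    simp [mul_add, Complex.exp_add]
  have hmem : ∀ z : ℂ, 0 < z.im → Complex.exp (2 * π * Complex.I * z) ∈ Metric.ball (0:ℂ) 1 := by
    intro z hz
    have := norm_exp_two_pi_I_lt_one ⟨z, hz⟩
    simpa using this
  have hbdd : IsBoundedAtImInfty (fun z : ℍ => G (Complex.exp (2 * π * Complex.I * z))) := by
    have h0 : ContinuousAt G 0 :=
      (hG.differentiableAt (Metric.isOpen_ball.mem_nhds (by simp))).continuousAt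
    have h1 : Filter.Tendsto (fun z : ℍ => G (Complex.exp (2 * π * Complex.I * z))) atImInfty
        (nhds (G 0)) := by
      refine h0.tendsto.comp ?_
      have := qParam_tendsto_atImInfty (h := 1) zero_lt_one
      exact this.congr hq1
    exact h1.isBigO_one ℝ
  let f : ModularForm 𝒮ℒ 0 :=
    { toFun := fun z : ℍ => G (Complex.exp (2 * π * Complex.I * z))
      slash_action_eq' := by
        intro A hA
        obtain ⟨A, rfl⟩ := hA
        exact slash_action_generators_SL2Z hS' hT' A
      holo' := by
        rw [UpperHalfPlane.mdifferentiable_iff]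
        have : DifferentiableOn ℂ (fun z : ℂ => G (Complex.exp (2 * π * Complex.I * z)))
            {z | 0 < z.im} :=
          hG.comp (by fun_prop) (fun z hz => hmem z hz)
        refine this.congr fun z hz => ?_
        simp [ofComplex_apply_of_im_pos hz]
      bdd_at_cusps' := by
        intro c hc
        rw [Subgroup.IsArithmetic.isCusp_iff_isCusp_SL2Z] at hc
        rw [OnePoint.isBoundedAt_iff_forall_SL2Z hc]
        intro γ _
        rw [slash_action_generators_SL2Z hS' hT']
        exact hbdd }
  obtain ⟨c, hc⟩ := ModularFormClass.levelOne_weight_zero_const f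
  have hc' : ∀ q ∈ Metric.ball (0:ℂ) 1, q ≠ 0 → G q = c := by
    intro q hq hq0
    have him := Function.Periodic.im_invQParam_pos_of_norm_lt_one (h := 1) Real.zero_lt_one
      (mem_ball_zero_iff.mp hq) hq0
    have h2 := congrFun hc ⟨_, him⟩
    have h3 : G (Complex.exp (2 * π * Complex.I * Function.Periodic.invQParam 1 q)) = c := h2
    rw [← hq1 ⟨_, him⟩] at h3
    simpa [Function.Periodic.qParam_right_inv one_ne_zero hq0] using h3
  have h0 : G 0 = c := by
    have h0 : ContinuousAt G 0 :=
      (hG.differentiableAt (Metric.isOpen_ball.mem_nhds (by simp))).continuousAt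
    have h1 : Filter.Tendsto G (nhdsWithin 0 {0}ᶜ) (nhds (G 0)) := h0.tendsto.mono_left nhdsWithin_le_nhds
    have h2 : Filter.Tendsto G (nhdsWithin 0 {0}ᶜ) (nhds c) := by
      refine tendsto_const_nhds.congr' ?_
      have hb : Metric.ball (0:ℂ) 1 ∈ nhdsWithin 0 {0}ᶜ :=
        mem_nhdsWithin_of_mem_nhds (Metric.isOpen_ball.mem_nhds (by simp))
      filter_upwards [hb, self_mem_nhdsWithin] with q hq hq0
      exact (hc' q hq hq0).symm
    exact tendsto_nhds_unique h1 h2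
  intro q hq
  rcases eq_or_ne q 0 with rfl | hq0
  · rfl
  · rw [hc' q hq hq0, h0]

end RRconst

section RRtheta
open Complex

noncomputable def rrTh (c : ℤ) (τ : ℂ) : ℂ :=
  ∑' n : ℤ, (-1 : ℂ) ^ n * cexp (π * I * τ * (10 * n + c) ^ 2 / 20)

lemma rrTh_neg (c : ℤ) (τ : ℂ) : rrTh (-c) τ = rrTh c τ := by
  unfold rrTh
  rw [← (Equiv.neg ℤ).tsum_eq]
  refine tsum_congr fun n => ?_
  simp only [Equiv.neg_apply]
  congr 1
  · rw [zpow_neg, ← inv_zpow]; norm_num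
  · congr 1; push_cast; ring

lemma rrTh_add_ten (c : ℤ) (τ : ℂ) : rrTh (c + 10) τ = - rrTh c τ := by
  unfold rrTh
  rw [← (Equiv.addRight (-1:ℤ)).tsum_eq, ← tsum_neg]
  refine tsum_congr fun n => ?_
  simp only [Equiv.coe_addRight]
  rw [zpow_add₀ (by norm_num), ← neg_mul]
  congr 1
  · norm_num
  · congr 1; push_cast; ring

lemma rr_neg_one_zpow (n : ℤ) : (-1 : ℂ) ^ n = cexp (n * (π * I)) := by
  rw [Complex.exp_int_mul, Complex.exp_pi_mul_I]

lemma rrTh_eq_jacobi (c : ℤ) (τ : ℂ) :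
    rrTh c τ = cexp (π * I * τ * c ^ 2 / 20) * jacobiTheta₂ (1 / 2 + c * τ / 2) (5 * τ) := by
  unfold rrTh jacobiTheta₂
  rw [← tsum_mul_left]
  refine tsum_congr fun n => ?_
  rw [jacobiTheta₂_term, rr_neg_one_zpow, ← Complex.exp_add, ← Complex.exp_add]
  congr 1; ring

lemma rr_odd_exp (c k : ℤ) (hc : Odd c) : cexp (k * c * (π * I)) = (-1 : ℂ) ^ k := by
  have : (k * c * (π * I) : ℂ) = ((k * c : ℤ) : ℂ) * (π * I) := by push_cast; ring
  rw [this, ← rr_neg_one_zpow, mul_comm, zpow_mul, hc.neg_one_zpow]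

lemma rr_split (c : ℤ) (hc : Odd c) {τ : ℂ} (hτ : 0 < τ.im) :
    cexp (π * I * τ / 20) * jacobiTheta₂ ((c - τ) / 10) (τ / 5) =
      ∑ j : Fin 5, cexp (π * I * c * (j : ℕ) / 5) * rrTh (2 * (j : ℕ) - 1) τ := by
  have him : 0 < (τ / 5).im := by
    have : (τ / 5) = τ / ((5 : ℝ) : ℂ) := by norm_num
    rw [this, Complex.div_ofReal_im]; positivity
  have hs := (hasSum_jacobiTheta₂_term ((c - τ) / 10) him).mul_left (cexp (π * I * τ / 20))
  have hs2 := (((Int.divModEquiv 5).symm).hasSum_iff.mpr hs)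
  have hs3 := ((Equiv.prodComm (Fin 5) ℤ).hasSum_iff.mpr hs2)
  rw [← hs3.tsum_eq, hs3.summable.tsum_prod, tsum_fintype]
  refine Finset.sum_congr rfl fun j _ => ?_
  unfold rrTh
  rw [← tsum_mul_left]
  refine tsum_congr fun k => ?_
  simp only [Function.comp, Equiv.prodComm_apply, Prod.swap, Int.divModEquiv_symm_apply]
  rw [jacobiTheta₂_term, ← Complex.exp_add, ← rr_odd_exp c k hc, ← Complex.exp_add, ← Complex.exp_add]
  congr 1; push_cast; ring

lemma rrTh_S (c : ℤ) (hc : Odd c) {τ : ℂ} (hτ : 0 < τ.im) :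
    rrTh c (-1 / τ) = 1 / (5 * I / τ) ^ (1 / 2 : ℂ) * (cexp (-(π * I * c / 10)) *
      ((1 + cexp (π * I * c / 5)) * rrTh 1 τ +
        (cexp (2 * (π * I * c / 5)) - cexp (4 * (π * I * c / 5))) * rrTh 3 τ)) := by
  have hτ0 : τ ≠ 0 := by rintro rfl; simp at hτ
  have h := rr_split c hc hτ
  have e0 : rrTh (-1) τ = rrTh 1 τ := rrTh_neg 1 τ
  have e5 : rrTh 5 τ = 0 := by
    have h1 := rrTh_add_ten (-5) τ
    have h2 := rrTh_neg 5 τ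
    norm_num at h1
    rw [h2] at h1
    linear_combination h1 / 2
  have e7 : rrTh 7 τ = - rrTh 3 τ := by
    have h1 := rrTh_add_ten (-3) τ
    have h2 := rrTh_neg 3 τ
    norm_num at h1
    rw [h2] at h1
    exact h1
  have h' : cexp (π * I * τ / 20) * jacobiTheta₂ ((c - τ) / 10) (τ / 5) =
      ((1 + cexp (π * I * c / 5)) * rrTh 1 τ +
        (cexp (2 * (π * I * c / 5)) - cexp (4 * (π * I * c / 5))) * rrTh 3 τ) := by
    rw [h, Fin.sum_univ_five]
    norm_num [e0, e5, e7]
    rw [show (π * I * c * 2 / 5 : ℂ) = 2 * (π * I * c / 5) by ring,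
      show (π * I * c * 4 / 5 : ℂ) = 4 * (π * I * c / 5) by ring]
    ring
  rw [rrTh_eq_jacobi, jacobiTheta₂_functional_equation, ← h']
  have a1 : (1 / 2 + (c:ℂ) * (-1 / τ) / 2) / (5 * (-1 / τ)) = (c - τ) / 10 := by
    field_simp; ring
  have a2 : -1 / (5 * (-1 / τ)) = τ / 5 := by field_simp
  have a3 : -I * (5 * (-1 / τ)) = 5 * I / τ := by field_simp
  rw [a1, a2, a3]
  have a4 : cexp (π * I * (-1 / τ) * c ^ 2 / 20) *
      cexp (-π * I * (1 / 2 + c * (-1 / τ) / 2) ^ 2 / (5 * (-1 / τ))) =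
      cexp (-(π * I * c / 10)) * cexp (π * I * τ / 20) := by
    rw [← Complex.exp_add, ← Complex.exp_add]
    congr 1
    field_simp
    ring
  linear_combination (1 / (5 * I / τ) ^ (1 / 2 : ℂ) * jacobiTheta₂ ((c - τ) / 10) (τ / 5)) * a4

end RRtheta

section RRtheta2
open Complex

lemma rr_cyc : ∃ w v : ℂ, w * v = 1 ∧ w ^ 8 - w ^ 6 + w ^ 4 - w ^ 2 + 1 = 0 ∧
    w = cexp (π * I / 10) ∧ v = cexp (-(π * I / 10)) := by
  refine ⟨_, _, ?_, ?_, rfl, rfl⟩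
  · rw [← Complex.exp_add]; simp
  · have h10 : cexp (π * I / 10) ^ 10 = -1 := by
      rw [← Complex.exp_nat_mul, ← Complex.exp_pi_mul_I]; congr 1; push_cast; ring
    have h2 : cexp (π * I / 10) ^ 2 + 1 ≠ 0 := by
      rw [← Complex.exp_nat_mul]
      have : ((2:ℕ) * (π * I / 10) : ℂ) = ((π / 5 : ℝ) : ℂ) * I := by push_cast; ring
      rw [this]
      intro h
      have h3 := congrArg Complex.im h
      rw [Complex.add_im, Complex.exp_ofReal_mul_I_im] at h3
      have : 0 < Real.sin (π / 5) := Real.sin_pos_of_pos_of_lt_pi (by positivity)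
        (by linarith [Real.pi_pos])
      simp at h3; linarith
    apply mul_left_cancel₀ h2
    linear_combination h10

lemma rrTh_S' : ∃ X Y : ℂ, X ^ 2 + Y ^ 2 = 5 ∧ X ^ 2 = X * Y + Y ^ 2 ∧
    ∀ τ : ℂ, 0 < τ.im →
    rrTh 1 (-1 / τ) = 1 / (5 * I / τ) ^ (1 / 2 : ℂ) * (X * rrTh 1 τ + Y * rrTh 3 τ) ∧
    rrTh 3 (-1 / τ) = 1 / (5 * I / τ) ^ (1 / 2 : ℂ) * (Y * rrTh 1 τ - X * rrTh 3 τ) := by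
  obtain ⟨w, v, hwv, hΦ, hw, hv⟩ := rr_cyc
  have hv' : v = w - w ^ 3 + w ^ 5 - w ^ 7 := by
    linear_combination (1 - w ^ 2 + w ^ 4 - w ^ 6) * w * hwv + v * hΦ
  refine ⟨v * (1 + w ^ 2), v * (w ^ 4 - w ^ 8), ?_, ?_, ?_⟩
  · subst hv'; grind
  · subst hv'; grind
  · intro τ hτ
    have e1 := rrTh_S 1 (by decide) hτ
    have e3 := rrTh_S 3 (by decide) hτ
    have f : ∀ (n : ℕ) (z : ℂ), z = n * (π * I / 10) → cexp z = w ^ n := by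
      rintro n z rfl; rw [hw, Complex.exp_nat_mul]
    have g : ∀ (n : ℕ) (z : ℂ), z = n * (-(π * I / 10)) → cexp z = v ^ n := by
      rintro n z rfl; rw [hv, Complex.exp_nat_mul]
    rw [g 1 _ (by push_cast; ring), f 2 _ (by push_cast; ring), f 4 _ (by push_cast; ring),
      f 8 _ (by push_cast; ring)] at e1
    rw [g 3 _ (by push_cast; ring), f 6 _ (by push_cast; ring), f 12 _ (by push_cast; ring),
      f 24 _ (by push_cast; ring)] at e3
    constructor
    · rw [e1]; ring
    · rw [e3]
      have c1 : v ^ 3 * (1 + w ^ 6) = v * (w ^ 4 - w ^ 8) := by subst hv'; grind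
      have c2 : v ^ 3 * (w ^ 12 - w ^ 24) = - (v * (1 + w ^ 2)) := by subst hv'; grind
      linear_combination (1 / (5 * I / τ) ^ (1 / 2 : ℂ)) * (rrTh 1 τ * c1 + rrTh 3 τ * c2)

lemma rr_klein (X Y a b : ℂ) (h1 : X ^ 2 + Y ^ 2 = 5) (h2 : X ^ 2 = X * Y + Y ^ 2) :
    (Y * b - X * a) * (X * b + Y * a) * ((X * b + Y * a) ^ 10
      - 11 * (Y * b - X * a) ^ 5 * (X * b + Y * a) ^ 5 - (Y * b - X * a) ^ 10) =
    5 ^ 6 * (a * b * (b ^ 10 - 11 * a ^ 5 * b ^ 5 - a ^ 10)) := by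
  grind
end RRtheta2

section RRseries
open Complex

def rrExp (c n : ℤ) : ℕ := ((5 * n ^ 2 + c * n) / 2).toNat

lemma rrExp_spec (c n : ℤ) (hc : c = 1 ∨ c = 3) : 2 * (rrExp c n : ℤ) = 5 * n ^ 2 + c * n := by
  unfold rrExp
  have hev : ∃ k, n * (n + 1) = k + k := Int.even_mul_succ_self n
  obtain ⟨k, hk⟩ := hev
  have hn : 0 ≤ 5 * n ^ 2 + c * n := by
    rcases le_total 0 n with h | h
    · rcases hc with rfl | rfl <;> positivity
    · rcases eq_or_lt_of_le h with h | h
      · subst h; simp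
      · rcases hc with rfl | rfl <;> nlinarith
  have h2 : ∃ m, 5 * n ^ 2 + c * n = 2 * m := by
    rcases hc with rfl | rfl
    · exact ⟨k + 2 * n ^ 2, by linarith⟩
    · exact ⟨k + 2 * n ^ 2 + n, by linarith⟩
  obtain ⟨m, hm⟩ := h2
  rw [hm] at hn ⊢
  rw [Int.mul_ediv_cancel_left _ (by norm_num)]
  omega

lemma rrExp_ge (c n : ℤ) (hc : c = 1 ∨ c = 3) : n.natAbs ≤ rrExp c n := by
  have h := rrExp_spec c n hc
  zify
  rcases abs_cases n with ⟨h1, h2⟩ | ⟨h1, h2⟩ <;> rw [h1] <;> rcases hc with rfl | rfl <;> nlinarith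

lemma rr_summable_natAbs {r : ℝ} (h0 : 0 ≤ r) (h1 : r < 1) :
    Summable fun n : ℤ => r ^ n.natAbs := by
  apply Summable.of_nat_of_neg <;> simpa using summable_geometric_of_lt_one h0 h1

noncomputable def rrA (c : ℤ) (q : ℂ) : ℂ := ∑' n : ℤ, (-1 : ℂ) ^ n * q ^ rrExp c n

lemma rrA_term_norm (c n : ℤ) (hc : c = 1 ∨ c = 3) {q : ℂ} {r : ℝ} (hq : ‖q‖ ≤ r) (hr : r < 1) :
    ‖(-1 : ℂ) ^ n * q ^ rrExp c n‖ ≤ r ^ n.natAbs := by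
  have hr0 : 0 ≤ r := (norm_nonneg q).trans hq
  rw [norm_mul, norm_zpow, norm_neg, norm_one, one_zpow, one_mul, norm_pow]
  exact (pow_le_pow_left₀ (norm_nonneg _) hq _).trans
    (pow_le_pow_of_le_one hr0 hr.le (rrExp_ge c n hc))

lemma rrA_differentiableOn (c : ℤ) (hc : c = 1 ∨ c = 3) :
    DifferentiableOn ℂ (rrA c) (Metric.ball 0 1) := by
  intro q hq
  rw [mem_ball_zero_iff] at hq
  obtain ⟨r, hr1, hr2⟩ := exists_between hq
  have : DifferentiableOn ℂ (rrA c) (Metric.ball 0 r) := by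
    refine Complex.differentiableOn_tsum_of_summable_norm
      (rr_summable_natAbs ((norm_nonneg q).trans hr1.le) hr2) (fun n => by fun_prop)
      Metric.isOpen_ball (fun n w hw => rrA_term_norm c n hc (mem_ball_zero_iff.mp hw).le hr2)
  exact (this.differentiableAt (Metric.isOpen_ball.mem_nhds
    (mem_ball_zero_iff.mpr hr1))).differentiableWithinAt

lemma rrA_zero (c : ℤ) (hc : c = 1 ∨ c = 3) : rrA c 0 = 1 := by
  unfold rrA
  rw [tsum_eq_single 0]
  · simp [rrExp]
  · intro n hn
    have := rrExp_ge c n hc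
    have h2 : rrExp c n ≠ 0 := by have := Int.natAbs_pos.mpr hn; omega
    simp [h2]

lemma rrTh_eq_rrA (c : ℤ) (hc : c = 1 ∨ c = 3) (τ : ℂ) :
    rrTh c τ = cexp (2 * π * I * τ * (c ^ 2 / 40)) * rrA c (cexp (2 * π * I * τ)) := by
  unfold rrTh rrA
  rw [← tsum_mul_left]
  refine tsum_congr fun n => ?_
  have h := rrExp_spec c n hc
  have h' : 2 * (rrExp c n : ℂ) = 5 * n ^ 2 + c * n := by exact_mod_cast congrArg (Int.cast : ℤ → ℂ) h
  rw [← Complex.exp_nat_mul, mul_left_comm, ← Complex.exp_add]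
  congr 2
  linear_combination (-(π * I * τ)) * h'
end RRseries

section RRident
open Complex

noncomputable def rrE (q : ℂ) : ℂ := ∏' n : ℕ, (1 - q ^ (n + 1))

lemma rrE_ne_zero {q : ℂ} (hq : ‖q‖ < 1) : rrE q ≠ 0 := by
  unfold rrE
  refine tprod_one_add_ne_zero_of_summable (f := fun n => -q ^ (n + 1)) ?_ ?_
  · intro n h
    have h1 : q ^ (n + 1) = 1 := by linear_combination -h
    have h2 := congrArg norm h1
    rw [norm_pow, norm_one] at h2
    have : ‖q‖ ^ (n + 1) < 1 := pow_lt_one₀ (norm_nonneg q) hq (Nat.succ_ne_zero n)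
    linarith
  · simpa using (summable_nat_add_iff 1).mpr (summable_geometric_of_lt_one (norm_nonneg _) hq)

lemma rrE_zero : rrE 0 = 1 := by simp [rrE]

lemma rrE_diff : DifferentiableOn ℂ rrE (Metric.ball 0 1) :=
  ModularForm.differentiableOn_tprod_one_sub_pow

lemma rr_eta (τ : ℂ) : ModularForm.eta τ = cexp (2 * π * I * τ / 24) * rrE (cexp (2 * π * I * τ)) := by
  simp [ModularForm.eta, rrE, ModularForm.eta_q, Function.Periodic.qParam]

lemma rr_mem (τ : ℂ) (hτ : 0 < τ.im) : cexp (2 * π * I * τ) ∈ Metric.ball (0:ℂ) 1 := by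
  have := UpperHalfPlane.norm_exp_two_pi_I_lt_one ⟨τ, hτ⟩
  simpa using this

lemma rr_im_S {τ : ℂ} (hτ : 0 < τ.im) : 0 < (-1 / τ).im := by
  rw [neg_div, neg_im, one_div, inv_im, neg_pos]
  have : 0 < normSq τ := by
    apply normSq_pos.mpr; rintro rfl; simp at hτ
  rw [neg_div]; simp; positivity

lemma rr_eta_S {τ : ℂ} (hτ : 0 < τ.im) :
    ModularForm.eta (-1 / τ) ^ 2 = τ / I * ModularForm.eta τ ^ 2 := by
  have h := ModularForm.eta_comp_eq_csqrt_I_inv (x := τ) hτ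
  simp only [Function.comp, Pi.smul_apply, Pi.mul_apply, smul_eq_mul] at h
  have hs : ∀ z : ℂ, z ≠ 0 → Complex.sqrt z ^ 2 = z := by
    intro z hz
    rw [_root_.sqrt_eq_exp hz, ← Complex.exp_nat_mul]
    push_cast
    rw [mul_div_cancel₀ _ (by norm_num), Complex.exp_log hz]
  have hτ0 : τ ≠ 0 := by rintro rfl; simp at hτ
  rw [h, mul_pow, mul_pow, inv_pow, hs _ I_ne_zero, hs _ hτ0]
  ring

lemma rr_sigma_sq {τ : ℂ} (hτ0 : τ ≠ 0) :
    (1 / (5 * I / τ) ^ (1 / 2 : ℂ)) ^ 2 = τ / I / 5 := by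
  rw [div_pow, one_pow, ← Complex.cpow_nat_mul]
  norm_num
  field_simp
  simp

lemma rr_icosa {q : ℂ} (hq : q ∈ Metric.ball (0:ℂ) 1) :
    rrA 3 q * rrA 1 q * (rrA 1 q ^ 10 - 11 * q * rrA 3 q ^ 5 * rrA 1 q ^ 5 - q ^ 2 * rrA 3 q ^ 10)
      = rrE q ^ 12 := by
  have hA := rrA_differentiableOn 3 (by norm_num)
  have hB := rrA_differentiableOn 1 (by norm_num)
  have key := rr_const_of_S (G := fun q => rrA 3 q * rrA 1 q * (rrA 1 q ^ 10 - 11 * q * rrA 3 q ^ 5 * rrA 1 q ^ 5 - q ^ 2 * rrA 3 q ^ 10)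
      / rrE q ^ 12) ?_ ?_ q hq
  · simp only [rrA_zero 3 (by norm_num), rrA_zero 1 (by norm_num), rrE_zero] at key
    rw [div_eq_iff (pow_ne_zero _ (rrE_ne_zero (mem_ball_zero_iff.mp hq)))] at key
    rw [key]; norm_num
  · refine DifferentiableOn.div ?_ (rrE_diff.pow 12)
      (fun x hx => pow_ne_zero _ (rrE_ne_zero (mem_ball_zero_iff.mp hx)))
    fun_prop
  · have hG : ∀ τ : ℂ, 0 < τ.im → (fun q => rrA 3 q * rrA 1 q * (rrA 1 q ^ 10 - 11 * q * rrA 3 q ^ 5 * rrA 1 q ^ 5 - q ^ 2 * rrA 3 q ^ 10)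
      / rrE q ^ 12) (cexp (2 * π * I * τ)) =
        rrTh 3 τ * rrTh 1 τ * (rrTh 1 τ ^ 10 - 11 * rrTh 3 τ ^ 5 * rrTh 1 τ ^ 5 - rrTh 3 τ ^ 10) / ModularForm.eta τ ^ 12 := by
      intro τ hτ
      have hE := rrE_ne_zero (mem_ball_zero_iff.mp (rr_mem τ hτ))
      simp only
      rw [rr_eta, rrTh_eq_rrA 3 (by norm_num), rrTh_eq_rrA 1 (by norm_num)]
      obtain ⟨u, hu⟩ : ∃ u, u = cexp (2 * π * I * τ / 120) := ⟨_, rfl⟩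
      have f : ∀ (n : ℕ) (z : ℂ), z = n * (2 * π * I * τ / 120) → cexp z = u ^ n := by
        rintro n z rfl; rw [hu, Complex.exp_nat_mul]
      rw [f 5 (2 * π * I * τ / 24) (by push_cast; ring), f 27 (2 * π * I * τ * ((3:ℤ) ^ 2 / 40)) (by push_cast; ring),
        f 3 (2 * π * I * τ * ((1:ℤ) ^ 2 / 40)) (by push_cast; ring)]
      have hu0 : u ≠ 0 := by rw [hu]; exact Complex.exp_ne_zero _
      have hq' : cexp (2 * π * I * τ) = u ^ 120 := f 120 _ (by push_cast; ring)
      generalize rrA 3 (cexp (2 * π * I * τ)) = A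
      generalize rrA 1 (cexp (2 * π * I * τ)) = B
      generalize rrE (cexp (2 * π * I * τ)) = E at *
      rw [hq', div_eq_div_iff (pow_ne_zero _ hE) (pow_ne_zero _ (mul_ne_zero (pow_ne_zero _ hu0) hE))]
      ring
    intro τ hτ
    obtain ⟨X, Y, h1, h2, h3⟩ := rrTh_S'
    have hτ0 : τ ≠ 0 := by rintro rfl; simp at hτ
    refine (hG _ (rr_im_S hτ)).trans (Eq.trans ?_ (hG τ hτ).symm)
    rw [(h3 τ hτ).1, (h3 τ hτ).2]
    have hk := rr_klein X Y (rrTh 3 τ) (rrTh 1 τ) h1 h2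
    have hσ := rr_sigma_sq hτ0
    have he := rr_eta_S hτ
    have hη : ModularForm.eta τ ≠ 0 := ModularForm.eta_ne_zero hτ
    have hη' : ModularForm.eta (-1 / τ) ≠ 0 := ModularForm.eta_ne_zero (rr_im_S hτ)
    rw [div_eq_div_iff (pow_ne_zero _ hη') (pow_ne_zero _ hη)]
    have he12 : ModularForm.eta (-1 / τ) ^ 12 = (τ / I) ^ 6 * ModularForm.eta τ ^ 12 := by
      rw [show (12:ℕ) = 2 * 6 by norm_num, pow_mul, he, mul_pow, ← pow_mul]
    have hσ12 : (1 / (5 * I / τ) ^ (1 / 2 : ℂ)) ^ 12 = (τ / I / 5) ^ 6 := by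
      rw [← hσ, ← pow_mul]
    rw [he12]
    generalize (1 / (5 * I / τ) ^ (1 / 2 : ℂ)) = σ at *
    linear_combination (ModularForm.eta τ ^ 12) * (σ ^ 12) * hk + (ModularForm.eta τ ^ 12) * 5 ^ 6 * (rrTh 3 τ * rrTh 1 τ * (rrTh 1 τ ^ 10 - 11 * rrTh 3 τ ^ 5 * rrTh 1 τ ^ 5 - rrTh 3 τ ^ 10)) * hσ12

lemma rrTh_hasDeriv (c : ℤ) (hc : c = 1 ∨ c = 3) {τ : ℂ} (hτ : 0 < τ.im) :
    HasDerivAt (rrTh c) (cexp (2 * π * I * τ * (c ^ 2 / 40)) * (2 * π * I) *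
      ((c ^ 2 / 40) * rrA c (cexp (2 * π * I * τ)) +
        cexp (2 * π * I * τ) * deriv (rrA c) (cexp (2 * π * I * τ)))) τ := by
  have h1 : HasDerivAt (fun τ : ℂ => cexp (2 * π * I * τ)) (cexp (2 * π * I * τ) * (2 * π * I)) τ := by
    simpa using ((hasDerivAt_id τ).const_mul (2 * π * I)).cexp
  have h2 : HasDerivAt (fun τ : ℂ => cexp (2 * π * I * τ * (c ^ 2 / 40)))
      (cexp (2 * π * I * τ * (c ^ 2 / 40)) * (2 * π * I * (c ^ 2 / 40))) τ := by
    simpa using (((hasDerivAt_id τ).const_mul (2 * π * I)).mul_const ((c:ℂ) ^ 2 / 40)).cexp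
  have h3 : HasDerivAt (rrA c) (deriv (rrA c) (cexp (2 * π * I * τ))) (cexp (2 * π * I * τ)) :=
    ((rrA_differentiableOn c hc).differentiableAt
      (Metric.isOpen_ball.mem_nhds (rr_mem τ hτ))).hasDerivAt
  have h4 := h2.mul (h3.comp τ h1)
  have hf : rrTh c = (fun τ : ℂ => cexp (2 * π * I * τ * (c ^ 2 / 40))) * (rrA c ∘ fun τ : ℂ => cexp (2 * π * I * τ)) := by
    ext z; simpa using rrTh_eq_rrA c hc z
  rw [hf]
  refine HasDerivAt.congr_deriv h4 ?_
  simp only [Function.comp_apply]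
  ring

noncomputable def rrW (τ : ℂ) : ℂ := deriv (rrTh 3) τ * rrTh 1 τ - rrTh 3 τ * deriv (rrTh 1) τ

lemma rrW_S {τ : ℂ} (hτ : 0 < τ.im) : rrW (-1 / τ) = (τ / I) ^ 3 * rrW τ := by
  obtain ⟨X, Y, h1, h2, h3⟩ := rrTh_S'
  have hτ0 : τ ≠ 0 := by rintro rfl; simp at hτ
  have hS : HasDerivAt (fun z : ℂ => -1 / z) (1 / τ ^ 2) τ := by
    have := ((hasDerivAt_inv hτ0).neg)
    rw [show (fun z : ℂ => -1 / z) = -(fun z : ℂ => z⁻¹) by funext z; simp [neg_div], show 1 / τ ^ 2 = - -(τ ^ 2)⁻¹ by simp]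
    exact this
  have d1 := (rrTh_hasDeriv 1 (by norm_num) hτ).differentiableAt.hasDerivAt
  have d3 := (rrTh_hasDeriv 3 (by norm_num) hτ).differentiableAt.hasDerivAt
  have s1 := ((rrTh_hasDeriv 1 (by norm_num) (rr_im_S hτ)).differentiableAt.hasDerivAt).comp τ hS
  have s3 := ((rrTh_hasDeriv 3 (by norm_num) (rr_im_S hτ)).differentiableAt.hasDerivAt).comp τ hS
  have hslit : 5 * I / τ ∈ slitPlane := by
    left
    have : 0 < normSq τ := normSq_pos.mpr hτ0
    rw [Complex.div_re]; simp; positivity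
  have hσd : DifferentiableAt ℂ (fun z : ℂ => 1 / (5 * I / z) ^ (1 / 2 : ℂ)) τ := by
    refine DifferentiableAt.div (by fun_prop) ?_ ?_
    · refine DifferentiableAt.cpow ?_ (by fun_prop) hslit
      exact DifferentiableAt.div (by fun_prop) (by fun_prop) hτ0
    · rw [Ne, Complex.cpow_eq_zero_iff]; simp [hτ0]
  have hσ := hσd.hasDerivAt
  generalize hσ' : deriv (fun z : ℂ => 1 / (5 * I / z) ^ (1 / 2 : ℂ)) τ = σ' at hσ
  have r1 := hσ.mul ((d1.const_mul X).add (d3.const_mul Y))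
  have r3 := hσ.mul ((d1.const_mul Y).sub (d3.const_mul X))
  have hev : ∀ᶠ z : ℂ in nhds τ, 0 < z.im :=
    (isOpen_lt continuous_const Complex.continuous_im).mem_nhds hτ
  have t1 := (r1.congr_of_eventuallyEq (f₁ := rrTh 1 ∘ fun z => -1 / z) (by
    filter_upwards [hev] with z hz; simpa using (h3 z hz).1)).unique s1
  have t3 := (r3.congr_of_eventuallyEq (f₁ := rrTh 3 ∘ fun z => -1 / z) (by
    filter_upwards [hev] with z hz; simpa using (h3 z hz).2)).unique s3
  have e1 := (h3 τ hτ).1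
  have e3 := (h3 τ hτ).2
  have hσ2 := rr_sigma_sq hτ0
  simp only [Pi.add_apply, Pi.sub_apply] at t1 t3
  unfold rrW
  rw [e1, e3]
  generalize (1 / (5 * I / τ) ^ (1 / 2 : ℂ)) = σ at *
  have t1' : deriv (rrTh 1) (-1 / τ) = τ ^ 2 * (σ' * (X * rrTh 1 τ + Y * rrTh 3 τ) + σ * (X * deriv (rrTh 1) τ + Y * deriv (rrTh 3) τ)) := by
    rw [t1]; field_simp
  have t3' : deriv (rrTh 3) (-1 / τ) = τ ^ 2 * (σ' * (Y * rrTh 1 τ - X * rrTh 3 τ) + σ * (Y * deriv (rrTh 1) τ - X * deriv (rrTh 3) τ)) := by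
    rw [t3]; field_simp
  rw [t1', t3']
  have hI : (τ / I) ^ 3 = - τ ^ 2 * (τ / I) := by
    have : (1 / I) ^ 2 = -1 := by simp
    rw [div_eq_mul_one_div]
    linear_combination τ ^ 3 * (1 / I) * this
  rw [hI]
  generalize τ / I = ρ at *
  generalize deriv (rrTh 1) τ = b'
  generalize deriv (rrTh 3) τ = a'
  generalize rrTh 1 τ = b
  generalize rrTh 3 τ = a
  linear_combination (-(τ ^ 2) * (X^2+Y^2) * (a' * b - a * b')) * hσ2 - τ ^ 2 * ρ / 5 * (a' * b - a * b') * h1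

lemma rr_wronsk {q : ℂ} (hq : q ∈ Metric.ball (0:ℂ) 1) :
    rrA 3 q * rrA 1 q + 5 * q * (deriv (rrA 3) q * rrA 1 q - rrA 3 q * deriv (rrA 1) q)
      = rrE q ^ 6 := by
  have hA := rrA_differentiableOn 3 (by norm_num)
  have hB := rrA_differentiableOn 1 (by norm_num)
  have hA' := hA.deriv Metric.isOpen_ball
  have hB' := hB.deriv Metric.isOpen_ball
  have key := rr_const_of_S (G := fun q => (rrA 3 q * rrA 1 q + 5 * q * (deriv (rrA 3) q * rrA 1 q - rrA 3 q * deriv (rrA 1) q))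
      / rrE q ^ 6) ?_ ?_ q hq
  · simp only [rrA_zero 3 (by norm_num), rrA_zero 1 (by norm_num), rrE_zero] at key
    rw [div_eq_iff (pow_ne_zero _ (rrE_ne_zero (mem_ball_zero_iff.mp hq)))] at key
    rw [key]; norm_num
  · refine DifferentiableOn.div ?_ (rrE_diff.pow 6)
      (fun x hx => pow_ne_zero _ (rrE_ne_zero (mem_ball_zero_iff.mp hx)))
    fun_prop
  · have hG : ∀ τ : ℂ, 0 < τ.im → (fun q => (rrA 3 q * rrA 1 q + 5 * q * (deriv (rrA 3) q * rrA 1 q - rrA 3 q * deriv (rrA 1) q))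
      / rrE q ^ 6) (cexp (2 * π * I * τ)) =
        5 / (2 * π * I) * rrW τ / ModularForm.eta τ ^ 6 := by
      intro τ hτ
      have hE := rrE_ne_zero (mem_ball_zero_iff.mp (rr_mem τ hτ))
      simp only
      unfold rrW
      rw [(rrTh_hasDeriv 1 (by norm_num) hτ).deriv, (rrTh_hasDeriv 3 (by norm_num) hτ).deriv]
      rw [rr_eta, rrTh_eq_rrA 3 (by norm_num), rrTh_eq_rrA 1 (by norm_num)]
      obtain ⟨u, hu⟩ : ∃ u, u = cexp (2 * π * I * τ / 120) := ⟨_, rfl⟩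
      have f : ∀ (n : ℕ) (z : ℂ), z = n * (2 * π * I * τ / 120) → cexp z = u ^ n := by
        rintro n z rfl; rw [hu, Complex.exp_nat_mul]
      rw [f 5 (2 * π * I * τ / 24) (by push_cast; ring), f 27 (2 * π * I * τ * ((3:ℤ) ^ 2 / 40)) (by push_cast; ring),
        f 3 (2 * π * I * τ * ((1:ℤ) ^ 2 / 40)) (by push_cast; ring)]
      have hu0 : u ≠ 0 := by rw [hu]; exact Complex.exp_ne_zero _
      generalize deriv (rrA 3) (cexp (2 * π * I * τ)) = A'
      generalize deriv (rrA 1) (cexp (2 * π * I * τ)) = B'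
      generalize rrA 3 (cexp (2 * π * I * τ)) = A
      generalize rrA 1 (cexp (2 * π * I * τ)) = B
      generalize rrE (cexp (2 * π * I * τ)) = E at *
      generalize (cexp (2 * π * I * τ)) = Q at *
      have hp : (2 * π * I : ℂ) ≠ 0 := Complex.two_pi_I_ne_zero
      generalize (2 * π * I : ℂ) = P at *
      field_simp
      push_cast
      ring
    intro τ hτ
    refine (hG _ (rr_im_S hτ)).trans (Eq.trans ?_ (hG τ hτ).symm)
    rw [rrW_S hτ]
    have he := rr_eta_S hτ
    have hτ0 : τ ≠ 0 := by rintro rfl; simp at hτ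
    have hη : ModularForm.eta τ ≠ 0 := ModularForm.eta_ne_zero hτ
    have he6 : ModularForm.eta (-1 / τ) ^ 6 = (τ / I) ^ 3 * ModularForm.eta τ ^ 6 := by
      rw [show (6:ℕ) = 2 * 3 by norm_num, pow_mul, he, mul_pow, ← pow_mul]
    rw [he6]
    have : (τ / I) ≠ 0 := div_ne_zero hτ0 I_ne_zero
    generalize τ / I = ρ at *
    field_simp
end RRident

section RRprod
open Filter Topology

noncomputable def rrP (r : ℕ) (q : ℝ) : ℝ := ∏' j : ℕ, (1 - q ^ (5 * j + r))

lemma rr_pow_lt {q : ℝ} (h0 : 0 < q) (h1 : q < 1) (n : ℕ) : 0 < 1 - q ^ (n + 1) := by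
  have : q ^ (n + 1) < 1 := pow_lt_one₀ h0.le h1 (Nat.succ_ne_zero n)
  linarith

lemma rr_sum5 {q : ℝ} (h0 : 0 < q) (h1 : q < 1) (r : ℕ) : Summable fun j : ℕ => q ^ (5 * j + r) := by
  have : Summable fun j : ℕ => (q ^ 5) ^ j * q ^ r :=
    (summable_geometric_of_lt_one (by positivity) (pow_lt_one₀ h0.le h1 (by norm_num))).mul_right _
  refine this.congr fun j => ?_
  rw [← pow_mul, ← pow_add]

lemma rrP_hasProd {q : ℝ} (h0 : 0 < q) (h1 : q < 1) (r : ℕ) :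
    HasProd (fun j : ℕ => (1 - q ^ (5 * j + r))) (rrP r q) := by
  have : Multipliable (fun j : ℕ => (1 + -q ^ (5 * j + r))) := by
    apply multipliable_one_add_of_summable
    simpa using (rr_sum5 h0 h1 r).norm
  simpa [rrP, sub_eq_add_neg] using this.hasProd

lemma rrP_tendsto {q : ℝ} (h0 : 0 < q) (h1 : q < 1) (r : ℕ) :
    Tendsto (fun N => ∏ j ∈ Finset.range N, (1 - q ^ (5 * j + r))) atTop (𝓝 (rrP r q)) :=
  (rrP_hasProd h0 h1 r).tendsto_prod_nat

lemma rrP_pos {q : ℝ} (h0 : 0 < q) (h1 : q < 1) (r : ℕ) : 0 < rrP (r + 1) q := by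
  have hne : rrP (r + 1) q ≠ 0 := by
    unfold rrP
    refine tprod_one_add_ne_zero_of_summable (f := fun j => -q ^ (5 * j + (r + 1))) ?_ ?_
    · intro j
      have := rr_pow_lt h0 h1 (5 * j + r)
      rw [← sub_eq_add_neg]
      exact this.ne'
    · simpa using (rr_sum5 h0 h1 (r + 1)).norm
  refine lt_of_le_of_ne ?_ hne.symm
  refine ge_of_tendsto' (rrP_tendsto h0 h1 (r + 1)) fun N => ?_
  exact Finset.prod_nonneg fun j _ => (rr_pow_lt h0 h1 (5 * j + r)).le

/-- the finite Pochhammer symbol -/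
noncomputable def rrQ (p : ℝ) (n : ℕ) : ℝ := ∏ j ∈ Finset.range n, (1 - p ^ (j + 1))

noncomputable def rrH (p : ℝ) (m : ℤ) : ℝ := if m < 0 then 0 else (rrQ p m.toNat)⁻¹

lemma rrQ_pos {p : ℝ} (h0 : 0 < p) (h1 : p < 1) (n : ℕ) : 0 < rrQ p n :=
  Finset.prod_pos fun j _ => rr_pow_lt h0 h1 j

lemma rrH_rec {p : ℝ} (h0 : 0 < p) (h1 : p < 1) (m : ℤ) :
    (1 - p ^ m) * rrH p m = rrH p (m - 1) := by
  rcases lt_trichotomy m 0 with h | h | h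
  · simp [rrH, h, show m - 1 < 0 by omega]
  · subst h; simp [rrH]
  · obtain ⟨k, rfl⟩ : ∃ k : ℕ, m = k + 1 := ⟨(m - 1).toNat, by omega⟩
    have e1 : ((k : ℤ) + 1).toNat = k + 1 := by omega
    have hk := rrQ_pos h0 h1 k
    have hp := rr_pow_lt h0 h1 k
    have e2 : p ^ ((k : ℤ) + 1) = p ^ (k + 1) := by exact_mod_cast zpow_natCast p (k + 1)
    rw [rrH, if_neg (by omega), e1, e2, rrH, if_neg (by omega)]
    have e3 : ((k : ℤ) + 1 - 1).toNat = k := by omega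
    rw [e3, rrQ, Finset.prod_range_succ, ← rrQ]
    field_simp

lemma rr_jtp_fin {p x : ℝ} (h0 : 0 < p) (h1 : p < 1) (hx : x ≠ 0) {T : ℤ → ℝ} (hT0 : T 0 = 1)
    (hT : ∀ n, T (n + 1) = - x * p ^ n * T n) (a b : ℕ) :
    HasSum (fun n : ℤ => T n * (rrQ p (a + b) * rrH p (a + n) * rrH p (b - n)))
      ((∏ j ∈ Finset.range b, (1 - x * p ^ j)) * ∏ j ∈ Finset.range a, (1 - x⁻¹ * p ^ (j + 1))) := by
  induction b with
  | zero =>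
    induction a with
    | zero =>
      have := hasSum_single (f := fun n : ℤ => T n * (rrQ p (0 + 0) * rrH p ((0:ℕ) + n) * rrH p ((0:ℕ) - n))) 0 (by
        intro n hn
        rcases lt_or_gt_of_ne hn with h | h
        · simp [rrH, h]
        · simp [rrH, h])
      simpa [hT0, rrH, rrQ] using this
    | succ a ih =>
      have sh := ((Equiv.addRight (1:ℤ)).hasSum_iff).mpr ih
      have := ih.add (sh.mul_left (-(x⁻¹ * p ^ (a + 1))))
      rw [Finset.prod_range_succ]
      convert this using 1
      · funext n
        simp only [Function.comp, Equiv.coe_addRight]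
        rw [hT]
        have r1 := rrH_rec h0 h1 (a + 1 + n)
        have r2 := rrH_rec h0 h1 (-n)
        rw [show (a:ℤ) + 1 + n - 1 = a + n by ring] at r1
        rw [show rrQ p (a + 1 + 0) = rrQ p a * (1 - p ^ (a + 1)) by
          rw [add_zero, rrQ, Finset.prod_range_succ, ← rrQ]]
        rw [add_zero, show (a:ℤ) + (n + 1) = a + 1 + n by ring, show ((0:ℕ):ℤ) - (n + 1) = -n - 1 by push_cast; ring,
          show ((0:ℕ):ℤ) - n = -n by push_cast; ring, ← r1, ← r2]
        push_cast
        have z1 : p ^ ((a:ℤ) + 1 + n) = p ^ (a + 1) * p ^ n := by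
          rw [zpow_add₀ h0.ne']; norm_cast
        have z2 : p ^ n * p ^ (-n) = 1 := by rw [← zpow_add₀ h0.ne']; simp
        rw [z1]
        have z3 : x⁻¹ * x = 1 := inv_mul_cancel₀ hx
        generalize p ^ n = u at *
        generalize p ^ (-n) = v at *
        generalize x⁻¹ = y at *
        linear_combination (- T n * rrQ p a * rrH p (a + 1 + n) * rrH p (-n) * p ^ (a + 1) * u * (1 - v)) * z3
          + (T n * rrQ p a * rrH p (a + 1 + n) * rrH p (-n) * p ^ (a + 1)) * z2
      · simp only [Finset.prod_range_zero]
        ring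
  | succ b ih =>
    have sh := ((Equiv.subRight (1:ℤ)).hasSum_iff).mpr ih
    have := ih.add (sh.mul_left (-(x * p ^ b)))
    rw [Finset.prod_range_succ]
    convert this using 1
    · funext n
      simp only [Function.comp, Equiv.subRight_apply]
      have hTn := hT (n - 1)
      rw [sub_add_cancel] at hTn
      have r1 := rrH_rec h0 h1 (a + n)
      have r2 := rrH_rec h0 h1 (b + 1 - n)
      rw [show (b:ℤ) + 1 - n - 1 = b - n by ring] at r2
      rw [← add_assoc, show rrQ p (a + b + 1) = rrQ p (a + b) * (1 - p ^ (a + b + 1)) by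
          rw [rrQ, Finset.prod_range_succ, ← rrQ]]
      rw [show (a:ℤ) + (n - 1) = a + n - 1 by ring, show (b:ℤ) - (n - 1) = b + 1 - n by ring, ← r1, ← r2]
      push_cast
      have z1 : p ^ ((b:ℤ) + 1 - n) * p ^ (n - 1) = p ^ b := by
        rw [← zpow_add₀ h0.ne', show (b:ℤ) + 1 - n + (n - 1) = b by ring]; norm_cast
      have z2 : p ^ ((a:ℤ) + n) * p ^ ((b:ℤ) + 1 - n) = p ^ (a + b + 1) := by
        rw [← zpow_add₀ h0.ne', show (a:ℤ) + n + (b + 1 - n) = ((a + b + 1 : ℕ) : ℤ) by push_cast; ring]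
        norm_cast
      rw [hTn, ← z1, ← z2]
      ring
    · ring

lemma rr_jtp {p x P L1 L2 : ℝ} (h0 : 0 < p) (h1 : p < 1) (hx : x ≠ 0) {T : ℤ → ℝ} (hT0 : T 0 = 1)
    (hT : ∀ n, T (n + 1) = - x * p ^ n * T n) (hs : Summable fun n => ‖T n‖)
    (hP0 : 0 < P) (hP : Tendsto (rrQ p) atTop (𝓝 P))
    (hL1 : Tendsto (fun N => ∏ j ∈ Finset.range N, (1 - x * p ^ j)) atTop (𝓝 L1))
    (hL2 : Tendsto (fun N => ∏ j ∈ Finset.range N, (1 - x⁻¹ * p ^ (j + 1))) atTop (𝓝 L2)) :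
    ∑' n, T n = P * L1 * L2 := by
  have hanti : Antitone (rrQ p) := antitone_nat_of_succ_le fun n => by
    rw [rrQ, Finset.prod_range_succ, ← rrQ]
    have := rrQ_pos h0 h1 n
    have h2 : 0 < p ^ (n + 1) := by positivity
    nlinarith
  have hge : ∀ n, P ≤ rrQ p n := fun n => hanti.le_of_tendsto hP n
  have hle : ∀ n, rrQ p n ≤ 1 := fun n => by simpa [rrQ] using hanti (Nat.zero_le n)
  have hH0 : ∀ m, 0 ≤ rrH p m := fun m => by
    unfold rrH; split_ifs
    · exact le_rfl
    · exact inv_nonneg.mpr (rrQ_pos h0 h1 _).le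
  have hH1 : ∀ m, rrH p m ≤ P⁻¹ := fun m => by
    unfold rrH; split_ifs
    · exact inv_nonneg.mpr hP0.le
    · exact inv_anti₀ hP0 (hge _)
  have hHt : Tendsto (rrH p) atTop (𝓝 P⁻¹) := by
    have : Tendsto (fun m : ℤ => (rrQ p m.toNat)⁻¹) atTop (𝓝 P⁻¹) := by
      refine (hP.inv₀ hP0.ne').comp ?_
      refine tendsto_atTop.mpr fun b => ?_
      filter_upwards [eventually_ge_atTop (b:ℤ)] with m hm
      omega
    refine this.congr' ?_
    filter_upwards [eventually_ge_atTop (0:ℤ)] with m hm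
    rw [rrH, if_neg (by omega)]
  have key := tendsto_tsum_of_dominated_convergence (𝓕 := atTop)
    (f := fun (N : ℕ) (n : ℤ) => T n * (rrQ p (N + N) * rrH p (N + n) * rrH p (N - n)))
    (g := fun n => T n * (P * P⁻¹ * P⁻¹)) (bound := fun n => ‖T n‖ * (1 * P⁻¹ * P⁻¹))
    (hs.mul_right _) ?_ ?_
  · have hR : Tendsto (fun N : ℕ => ∑' n : ℤ, T n * (rrQ p (N + N) * rrH p (N + n) * rrH p (N - n)))
        atTop (𝓝 (L1 * L2)) := by
      refine (hL1.mul hL2).congr fun N => ?_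
      exact ((rr_jtp_fin h0 h1 hx hT0 hT N N).tsum_eq).symm
    have := tendsto_nhds_unique key hR
    rw [tsum_mul_right] at this
    field_simp at this
    rw [this]
  · intro n
    refine Tendsto.const_mul _ (Tendsto.mul (Tendsto.mul ?_ ?_) ?_)
    · exact hP.comp (tendsto_atTop_mono (fun N => by simp) tendsto_id)
    · exact hHt.comp (tendsto_atTop_add_const_right _ _ tendsto_natCast_atTop_atTop)
    · simp_rw [sub_eq_add_neg]
      exact hHt.comp (tendsto_atTop_add_const_right _ _ tendsto_natCast_atTop_atTop)
  · refine Eventually.of_forall fun N n => ?_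
    rw [norm_mul]
    refine mul_le_mul_of_nonneg_left ?_ (norm_nonneg _)
    rw [norm_mul, norm_mul, Real.norm_of_nonneg (hH0 _), Real.norm_of_nonneg (hH0 _),
      Real.norm_of_nonneg (rrQ_pos h0 h1 _).le]
    have := hP0.le
    have hPi : 0 ≤ P⁻¹ := inv_nonneg.mpr this
    exact mul_le_mul (mul_le_mul (hle _) (hH1 _) (hH0 _) zero_le_one) (hH1 _) (hH0 _) (by simpa using hPi)

lemma rrA_real {q : ℝ} (h0 : 0 < q) (h1 : q < 1) (c : ℤ) (hc : c = 1 ∨ c = 3) (r s : ℕ)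
    (hr : (2 * r : ℤ) = 5 - c) (hs : r + s = 5) :
    rrA c (q : ℂ) = ((rrP 5 q * rrP r q * rrP s q : ℝ) : ℂ) := by
  have hqn : ‖(q:ℂ)‖ ≤ q := by simp [abs_of_pos h0]
  have hnorm : ∀ n : ℤ, ‖(-1 : ℝ) ^ n * q ^ rrExp c n‖ ≤ q ^ n.natAbs := fun n => by
    have := rrA_term_norm c n hc hqn h1
    rw [← Complex.norm_real]
    push_cast
    exact this
  have hsum : Summable fun n : ℤ => ‖(-1 : ℝ) ^ n * q ^ rrExp c n‖ :=
    Summable.of_nonneg_of_le (fun _ => norm_nonneg _) hnorm (rr_summable_natAbs h0.le h1)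
  have hsum' : Summable fun n : ℤ => ‖(-1 : ℝ) ^ (-n) * q ^ rrExp c (-n)‖ :=
    ((Equiv.neg ℤ).summable_iff).mpr hsum
  have e1 : rrA c (q : ℂ) = ((∑' n : ℤ, (-1 : ℝ) ^ n * q ^ rrExp c n : ℝ) : ℂ) := by
    rw [rrA, Complex.ofReal_tsum]
    push_cast; rfl
  have e2 : ∑' n : ℤ, (-1 : ℝ) ^ n * q ^ rrExp c n = ∑' n : ℤ, (-1 : ℝ) ^ (-n) * q ^ rrExp c (-n) :=
    ((Equiv.neg ℤ).tsum_eq (fun n : ℤ => (-1 : ℝ) ^ n * q ^ rrExp c n)).symm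
  have hp0 : 0 < q ^ 5 := by positivity
  have hp1 : q ^ 5 < 1 := pow_lt_one₀ h0.le h1 (by norm_num)
  rw [e1, e2]
  congr 1
  refine rr_jtp (p := q ^ 5) (x := q ^ r) hp0 hp1 (by positivity) ?_ ?_ hsum' (rrP_pos h0 h1 4) ?_ ?_ ?_
  · simp [rrExp]
  · intro n
    have s1 := rrExp_spec c (-n) hc
    have s2 := rrExp_spec c (-(n + 1)) hc
    have : (rrExp c (-(n + 1)) : ℤ) = rrExp c (-n) + r + 5 * n := by
      have : 2 * (rrExp c (-(n + 1)) : ℤ) = 2 * (rrExp c (-n) + r + 5 * n) := by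
        rw [mul_add, mul_add, s1, s2, hr]; ring
      omega
    rw [← zpow_natCast q (rrExp c (-(n + 1))), this, zpow_add₀ h0.ne', zpow_add₀ h0.ne',
      zpow_natCast, zpow_natCast, zpow_mul, neg_add, zpow_add₀ (by norm_num)]
    rw [show (q ^ (5:ℤ)) = q ^ 5 by norm_cast, show (-1:ℝ) ^ (-1:ℤ) = -1 by norm_num]
    ring
  · refine (rrP_tendsto h0 h1 5).congr fun N => ?_
    refine Finset.prod_congr rfl fun j _ => ?_
    rw [← pow_mul]; ring
  · refine (rrP_tendsto h0 h1 r).congr fun N => ?_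
    refine Finset.prod_congr rfl fun j _ => ?_
    rw [← pow_mul, ← pow_add]; ring
  · refine (rrP_tendsto h0 h1 s).congr fun N => ?_
    refine Finset.prod_congr rfl fun j _ => ?_
    have : (q ^ 5) ^ (j + 1) = q ^ r * q ^ (5 * j + s) := by
      rw [← pow_mul, ← pow_add]; congr 1; omega
    rw [this, inv_mul_cancel_left₀ (by positivity)]

lemma eulerE_hasProd {q : ℝ} (h0 : 0 < q) (h1 : q < 1) :
    HasProd (fun j : ℕ => (1 - q ^ (j + 1))) (eulerE q) := by
  have : Multipliable (fun j : ℕ => (1 + -q ^ (j + 1))) := by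
    apply multipliable_one_add_of_summable
    simpa using ((summable_nat_add_iff 1).mpr (summable_geometric_of_lt_one h0.le h1)).norm
  have := this.hasProd
  simpa [eulerE, sub_eq_add_neg] using this

lemma eulerE_tendsto {q : ℝ} (h0 : 0 < q) (h1 : q < 1) :
    Tendsto (fun N => ∏ j ∈ Finset.range N, (1 - q ^ (j + 1))) atTop (𝓝 (eulerE q)) :=
  (eulerE_hasProd h0 h1).tendsto_prod_nat

lemma rrE_real {q : ℝ} (h0 : 0 < q) (h1 : q < 1) : rrE (q : ℂ) = (eulerE q : ℂ) := by
  have := ((eulerE_hasProd h0 h1).map Complex.ofRealHom Complex.continuous_ofReal).tprod_eq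
  rw [rrE]
  simpa [Function.comp] using this

lemma eulerE_eq {q : ℝ} (h0 : 0 < q) (h1 : q < 1) :
    eulerE q = rrP 1 q * rrP 2 q * rrP 3 q * rrP 4 q * rrP 5 q := by
  have t1 := (eulerE_tendsto h0 h1).comp (tendsto_id.const_mul_atTop' (r := 5) (by norm_num))
  have t2 := ((((rrP_tendsto h0 h1 1).mul (rrP_tendsto h0 h1 2)).mul (rrP_tendsto h0 h1 3)).mul
    (rrP_tendsto h0 h1 4)).mul (rrP_tendsto h0 h1 5)
  refine tendsto_nhds_unique t1 (t2.congr fun N => ?_)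
  simp only [Function.comp, id]
  induction N with
  | zero => simp
  | succ N ih =>
    rw [show 5 * (N + 1) = 5 * N + 1 + 1 + 1 + 1 + 1 by ring]
    simp only [Finset.prod_range_succ]
    rw [← ih]
    ring

lemma eulerE_pow5 (q : ℝ) : eulerE (q ^ 5) = rrP 5 q := by
  unfold eulerE rrP
  refine tprod_congr fun j => ?_
  rw [← pow_mul]; ring

lemma rrProd_eq {q : ℝ} (h0 : 0 < q) (h1 : q < 1) :
    rrProd q ^ 5 = q * (rrP 1 q * rrP 4 q / (rrP 2 q * rrP 3 q)) ^ 5 := by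
  have hp : ∏' j : ℕ, ((1 - q ^ (5 * j + 1)) * (1 - q ^ (5 * j + 4))) /
      ((1 - q ^ (5 * j + 2)) * (1 - q ^ (5 * j + 3))) = rrP 1 q * rrP 4 q / (rrP 2 q * rrP 3 q) := by
    refine HasProd.tprod_eq ?_
    refine HasProd.div₀ ((rrP_hasProd h0 h1 1).mul (rrP_hasProd h0 h1 4))
      ((rrP_hasProd h0 h1 2).mul (rrP_hasProd h0 h1 3)) ?_
    exact (mul_pos (rrP_pos h0 h1 1) (rrP_pos h0 h1 2)).ne'
  rw [rrProd, hp, mul_pow, ← Real.rpow_natCast, ← Real.rpow_mul h0.le]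
  norm_num
end RRprod

section RRfinal
open Filter Topology

noncomputable def rrFc (z : ℂ) : ℂ := z * rrA 3 z ^ 5 / rrA 1 z ^ 5

lemma rrA3_real {q : ℝ} (h0 : 0 < q) (h1 : q < 1) :
    rrA 3 (q : ℂ) = ((rrP 5 q * rrP 1 q * rrP 4 q : ℝ) : ℂ) :=
  rrA_real h0 h1 3 (by norm_num) 1 4 (by norm_num) (by norm_num)

lemma rrA1_real {q : ℝ} (h0 : 0 < q) (h1 : q < 1) :
    rrA 1 (q : ℂ) = ((rrP 5 q * rrP 2 q * rrP 3 q : ℝ) : ℂ) :=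
  rrA_real h0 h1 1 (by norm_num) 2 3 (by norm_num) (by norm_num)

lemma rrFc_real {q : ℝ} (h0 : 0 < q) (h1 : q < 1) : rrFc (q : ℂ) = ((rrProd q ^ 5 : ℝ) : ℂ) := by
  rw [rrFc, rrA3_real h0 h1, rrA1_real h0 h1, rrProd_eq h0 h1]
  have p2 := rrP_pos h0 h1 1
  have p3 := rrP_pos h0 h1 2
  have p5 := rrP_pos h0 h1 4
  norm_cast
  norm_num at *
  field_simp

lemma rrFc_hasDeriv {z : ℂ} (hz : z ∈ Metric.ball (0:ℂ) 1) (hB : rrA 1 z ≠ 0) :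
    HasDerivAt rrFc (rrA 3 z ^ 4 / rrA 1 z ^ 6 * rrE z ^ 6) z := by
  have dA : HasDerivAt (rrA 3) (deriv (rrA 3) z) z :=
    ((rrA_differentiableOn 3 (by norm_num)).differentiableAt (Metric.isOpen_ball.mem_nhds hz)).hasDerivAt
  have dB : HasDerivAt (rrA 1) (deriv (rrA 1) z) z :=
    ((rrA_differentiableOn 1 (by norm_num)).differentiableAt (Metric.isOpen_ball.mem_nhds hz)).hasDerivAt
  have h := ((hasDerivAt_id z).mul (dA.pow 5)).div (dB.pow 5) (pow_ne_zero 5 hB)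
  refine HasDerivAt.congr_deriv h ?_
  rw [← rr_wronsk hz]
  simp only [Pi.mul_apply, Pi.pow_apply, id]
  field_simp
  push_cast
  ring

lemma rr_mem_ball {q : ℝ} (h0 : 0 ≤ q) (h1 : q < 1) : (q : ℂ) ∈ Metric.ball (0:ℂ) 1 := by
  simp [abs_of_nonneg h0, h1]

lemma rrA1_ne {q : ℝ} (h0 : 0 ≤ q) (h1 : q < 1) : rrA 1 (q : ℂ) ≠ 0 := by
  rcases eq_or_lt_of_le h0 with h | h
  · subst h; simp [rrA_zero 1 (by norm_num)]
  · rw [rrA1_real h h1]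
    have p2 := rrP_pos h h1 1
    have p3 := rrP_pos h h1 2
    have p5 := rrP_pos h h1 4
    norm_num at *
    exact ⟨⟨p5.ne', p2.ne'⟩, p3.ne'⟩

lemma rr_EP {q : ℝ} (h0 : 0 < q) (h1 : q < 1) :
    eulerE q * rrP 5 q = (rrP 5 q * rrP 1 q * rrP 4 q) * (rrP 5 q * rrP 2 q * rrP 3 q) := by
  rw [eulerE_eq h0 h1]; ring

lemma rr_part1 {q : ℝ} (h0 : 0 < q) (h1 : q < 1) :
    (∫ t in (0:ℝ)..q, (eulerE t) ^ 5 / eulerE (t ^ 5) * (rrProd t) ^ 5 / t) = (rrProd q) ^ 5 := by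
  have hd : ∀ t : ℝ, 0 ≤ t → t < 1 → HasDerivAt (fun x : ℝ => (rrFc x).re)
      ((rrA 3 (t:ℂ) ^ 4 / rrA 1 (t:ℂ) ^ 6 * rrE (t:ℂ) ^ 6).re) t := fun t ht0 ht1 =>
    (rrFc_hasDeriv (rr_mem_ball ht0 ht1) (rrA1_ne ht0 ht1)).real_of_complex
  have hc : ContinuousOn (fun x : ℝ => (rrFc x).re) (Set.Icc 0 q) := fun t ht =>
    (hd t ht.1 (ht.2.trans_lt h1)).continuousAt.continuousWithinAt
  have hd' : ∀ t ∈ Set.Ioo 0 q, HasDerivAt (fun x : ℝ => (rrFc x).re)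
      ((eulerE t) ^ 5 / eulerE (t ^ 5) * (rrProd t) ^ 5 / t) t := by
    intro t ht
    have ht1 := ht.2.trans h1
    refine (hd t ht.1.le ht1).congr_deriv ?_
    rw [rrA3_real ht.1 ht1, rrA1_real ht.1 ht1, rrE_real ht.1 ht1, rrProd_eq ht.1 ht1, eulerE_pow5]
    have p1 := rrP_pos ht.1 ht1 0
    have p2 := rrP_pos ht.1 ht1 1
    have p3 := rrP_pos ht.1 ht1 2
    have p4 := rrP_pos ht.1 ht1 3
    have p5 := rrP_pos ht.1 ht1 4
    have := ht.1
    norm_cast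
    rw [eulerE_eq ht.1 ht1]
    norm_num at p1 p2 p3 p4 p5
    field_simp
  have hnn : ∀ t ∈ Set.Ioo 0 q, 0 ≤ (eulerE t) ^ 5 / eulerE (t ^ 5) * (rrProd t) ^ 5 / t := by
    intro t ht
    have ht1 := ht.2.trans h1
    rw [rrProd_eq ht.1 ht1, eulerE_pow5, eulerE_eq ht.1 ht1]
    have p1 := rrP_pos ht.1 ht1 0
    have p2 := rrP_pos ht.1 ht1 1
    have p3 := rrP_pos ht.1 ht1 2
    have p4 := rrP_pos ht.1 ht1 3
    have p5 := rrP_pos ht.1 ht1 4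
    have := ht.1
    norm_num at p1 p2 p3 p4 p5
    positivity
  have hint := intervalIntegral.integrableOn_deriv_of_nonneg hc hd' hnn
  have hi : IntervalIntegrable (fun t => (eulerE t) ^ 5 / eulerE (t ^ 5) * (rrProd t) ^ 5 / t)
      MeasureTheory.volume 0 q := (intervalIntegrable_iff_integrableOn_Ioc_of_le h0.le).mpr hint
  rw [intervalIntegral.integral_eq_sub_of_hasDerivAt_of_le h0.le hc hd' hi, rrFc_real h0 h1]
  rw [Complex.ofReal_re]
  simp [rrFc]

lemma rr_part2 : (rrProd (Real.exp (-2 * Real.pi / Real.sqrt 5))) ^ 5 =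
      Real.sqrt (((1 + Real.sqrt 5) / 2) ^ 10 + 1) - ((1 + Real.sqrt 5) / 2) ^ 5 := by
  have hs : (0:ℝ) < Real.sqrt 5 := by positivity
  have hs2 : Real.sqrt 5 ^ 2 = 5 := Real.sq_sqrt (by norm_num)
  obtain ⟨s, hsd⟩ : ∃ s, s = Real.sqrt 5 := ⟨_, rfl⟩
  rw [← hsd] at hs hs2 ⊢
  obtain ⟨t, ht⟩ : ∃ t, t = Real.exp (-2 * Real.pi / s) := ⟨_, rfl⟩
  rw [← ht]
  have h0 : 0 < t := by rw [ht]; exact Real.exp_pos _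
  have h1 : t < 1 := by
    rw [ht, Real.exp_lt_one_iff, neg_mul, neg_div]
    have := Real.pi_pos
    simp; positivity
  obtain ⟨u, hu⟩ : ∃ u, u = Real.exp (-2 * Real.pi / s / 24) := ⟨_, rfl⟩
  have hu0 : 0 < u := by rw [hu]; exact Real.exp_pos _
  have hut : u ^ 24 = t := by
    rw [hu, ht, ← Real.exp_nat_mul]; congr 1; push_cast; ring
  have hsC : (s : ℂ) ≠ 0 := by exact_mod_cast hs.ne'
  have hs2C : (s : ℂ) ^ 2 = 5 := by exact_mod_cast hs2
  have hτ : 0 < (Complex.I / s).im := by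
    rw [Complex.div_ofReal_im]; simp [hs]
  have hE := rr_eta_S hτ
  have hI := Complex.I_sq
  have hneg : -1 / (Complex.I / s) = 5 * (Complex.I / s) := by
    have := Complex.I_ne_zero
    field_simp
    rw [hs2C, hI]; ring
  rw [hneg, rr_eta, rr_eta] at hE
  have c1 : Complex.exp (2 * π * Complex.I * (Complex.I / s)) = (t : ℂ) := by
    rw [ht]; push_cast; congr 1
    field_simp
    rw [hI]
  have c2 : Complex.exp (2 * π * Complex.I * (5 * (Complex.I / s))) = ((t ^ 5 : ℝ) : ℂ) := by
    rw [Complex.ofReal_pow, ← c1, ← Complex.exp_nat_mul]; congr 1; push_cast; ring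
  have c3 : Complex.exp (2 * π * Complex.I * (Complex.I / s) / 24) = (u : ℂ) := by
    rw [hu]; push_cast; congr 1
    field_simp
    rw [hI]
  have c4 : Complex.exp (2 * π * Complex.I * (5 * (Complex.I / s)) / 24) = ((u ^ 5 : ℝ) : ℂ) := by
    rw [Complex.ofReal_pow, ← c3, ← Complex.exp_nat_mul]; congr 1; push_cast; ring
  have c5 : Complex.I / s / Complex.I = ((s⁻¹ : ℝ) : ℂ) := by
    have := Complex.I_ne_zero
    push_cast; field_simp
  rw [c1, c2, c3, c4, c5, rrE_real h0 h1,
    rrE_real (by positivity) (pow_lt_one₀ h0.le h1 (by norm_num)), eulerE_pow5] at hE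
  have hE' : (u ^ 5 * rrP 5 t) ^ 2 = s⁻¹ * (u * eulerE t) ^ 2 := by exact_mod_cast hE
  have hic := rr_icosa (rr_mem_ball h0.le h1)
  rw [rrA3_real h0 h1, rrA1_real h0 h1, rrE_real h0 h1] at hic
  have hic' := hic
  norm_cast at hic'
  have hEP := rr_EP h0 h1
  have hR := rrFc_real h0 h1
  rw [rrFc, rrA3_real h0 h1, rrA1_real h0 h1] at hR
  norm_cast at hR
  have p1 := rrP_pos h0 h1 0
  have p2 := rrP_pos h0 h1 1
  have p3 := rrP_pos h0 h1 2
  have p4 := rrP_pos h0 h1 3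
  have p5 := rrP_pos h0 h1 4
  have hEpos : 0 < eulerE t := by rw [eulerE_eq h0 h1]; positivity
  norm_num at p1 p2 p3 p4 p5
  obtain ⟨A, hA⟩ : ∃ A, A = rrP 5 t * rrP 1 t * rrP 4 t := ⟨_, rfl⟩
  obtain ⟨B, hB⟩ : ∃ B, B = rrP 5 t * rrP 2 t * rrP 3 t := ⟨_, rfl⟩
  have hA0 : 0 < A := by rw [hA]; positivity
  have hB0 : 0 < B := by rw [hB]; positivity
  simp only [← hA, ← hB] at hic' hEP hR
  rw [← hR]
  generalize eulerE t = E at *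
  generalize rrP 5 t = P at *
  have hcube : t * P ^ 6 * (5 * s) = E ^ 6 := by
    have e1 : s * u ^ 8 * P ^ 2 = E ^ 2 := by
      have : u ^ 2 * (s * u ^ 8 * P ^ 2) = u ^ 2 * E ^ 2 := by
        have h3 : s * (u ^ 5 * P) ^ 2 = (u * E) ^ 2 := by
          rw [hE']; field_simp
        linear_combination h3
      exact mul_left_cancel₀ (by positivity) this
    have e2 : (s * u ^ 8 * P ^ 2) ^ 3 = (E ^ 2) ^ 3 := by rw [e1]
    rw [← hut]
    linear_combination e2 - u ^ 24 * P ^ 6 * s * hs2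
  have hquad : B ^ 10 - 11 * t * A ^ 5 * B ^ 5 - t ^ 2 * A ^ 10 = 5 * s * t * A ^ 5 * B ^ 5 := by
    have : A * B * (B ^ 10 - 11 * t * A ^ 5 * B ^ 5 - t ^ 2 * A ^ 10) = A * B * (5 * s * t * A ^ 5 * B ^ 5) := by
      rw [hic']
      have : (E * P) ^ 6 = (A * B) ^ 6 := by rw [hEP]
      linear_combination (-E ^ 6) * hcube + 5 * s * t * this
    exact mul_left_cancel₀ (by positivity) this
  obtain ⟨R, hRd⟩ : ∃ R, R = t * A ^ 5 / B ^ 5 := ⟨_, rfl⟩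
  have hR0 : 0 < R := by rw [hRd]; positivity
  have hRq : 1 - 11 * R - R ^ 2 = 5 * s * R := by
    rw [hRd]; field_simp
    linear_combination hquad
  rw [← hRd]
  have h5 : ((1 + s) / 2) ^ 5 = (11 + 5 * s) / 2 := by
    linear_combination ((s ^ 3 + 5 * s ^ 2 + 15 * s + 35) / 32) * hs2
  have h10 : ((1 + s) / 2) ^ 10 + 1 = (R + ((1 + s) / 2) ^ 5) ^ 2 := by
    rw [show (10:ℕ) = 5 * 2 by norm_num, pow_mul, h5]
    linear_combination hRq
  rw [h10, Real.sqrt_sq (by rw [h5]; positivity)]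
  ring
end RRfinal

theorem stmt_0 :
    (∀ q : ℝ, 0 < q → q < 1 →
      (∫ t in (0:ℝ)..q, (eulerE t) ^ 5 / eulerE (t ^ 5) * (rrProd t) ^ 5 / t)
        = (rrProd q) ^ 5) ∧
    (rrProd (Real.exp (-2 * Real.pi / Real.sqrt 5))) ^ 5 =
      Real.sqrt (((1 + Real.sqrt 5) / 2) ^ 10 + 1) - ((1 + Real.sqrt 5) / 2) ^ 5 := by
  exact ⟨fun q h0 h1 => rr_part1 h0 h1, rr_part2⟩
end

section
/- For every real number q with 0 < q < 1, ∫_0^q ∏_{j=1}^∞ (1−t^{2j})^8 (1−t^{3j})^6 / (1−t^j)^{10} dt = q ∏_{j=1}^∞ (1−q^{2j})(1−q^{6j})^5 / ((1−q^j)^5 (1−q^{3j})). Moreover this common value equals √2/12 when q = e^{−2π/√6}, equals (√3 − 1)/24 when q = e^{−2π/√3}, and equals (√6 − 2)/36 when q = e^{−2π/√2}. -/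
open Real

/-- The integrand `∏_{j=1}^∞ (1−t^{2j})^8 (1−t^{3j})^6 / (1−t^j)^{10}`. -/
noncomputable def U1 (t : ℝ) : ℝ :=
  ∏' j : ℕ, (1 - t ^ (2 * (j + 1))) ^ 8 * (1 - t ^ (3 * (j + 1))) ^ 6 / (1 - t ^ (j + 1)) ^ 10

/-- The antiderivative `q ∏_{j=1}^∞ (1−q^{2j})(1−q^{6j})^5 / ((1−q^j)^5 (1−q^{3j}))`. -/
noncomputable def V1 (q : ℝ) : ℝ :=
  q * ∏' j : ℕ, (1 - q ^ (2 * (j + 1))) * (1 - q ^ (6 * (j + 1))) ^ 5 /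
    ((1 - q ^ (j + 1)) ^ 5 * (1 - q ^ (3 * (j + 1))))

open Filter Topology

noncomputable def QP (x p : ℝ) : ℝ := ∏' k : ℕ, (1 - x * p ^ k)
noncomputable def EE (q : ℝ) : ℝ := ∏' k : ℕ, (1 - q ^ (k + 1))

lemma QP_summable (x : ℝ) {p : ℝ} (hp : |p| < 1) : Summable fun k : ℕ => ‖-(x * p ^ k)‖ := by
  simp only [norm_neg, norm_mul, norm_pow]
  exact (summable_geometric_of_lt_one (norm_nonneg _) (by simpa using hp)).mul_left _

lemma QP_hasProd (x : ℝ) {p : ℝ} (hp : |p| < 1) : HasProd (fun k : ℕ => 1 - x * p ^ k) (QP x p) := by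
  have := multipliable_one_add_of_summable (QP_summable x hp)
  simpa [QP, sub_eq_add_neg] using this.hasProd

lemma QP_tendsto (x : ℝ) {p : ℝ} (hp : |p| < 1) :
    Tendsto (fun n => ∏ k ∈ Finset.range n, (1 - x * p ^ k)) atTop (𝓝 (QP x p)) :=
  (QP_hasProd x hp).tendsto_prod_nat

lemma EE_eq (q : ℝ) : EE q = QP q q := by
  unfold EE QP
  simp only [pow_succ, mul_comm]

lemma EE_hasProd {q : ℝ} (hq : |q| < 1) : HasProd (fun k : ℕ => 1 - q ^ (k + 1)) (EE q) := by
  have := QP_hasProd q hq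
  rw [EE_eq]
  simpa only [pow_succ, mul_comm] using this

lemma QP_ne_zero {x p : ℝ} (hp : |p| < 1) (h : ∀ k : ℕ, 1 - x * p ^ k ≠ 0) : QP x p ≠ 0 := by
  have := tprod_one_add_ne_zero_of_summable (f := fun k : ℕ => -(x * p ^ k))
    (by simpa [sub_eq_add_neg] using h) (QP_summable x hp)
  simpa [QP, sub_eq_add_neg] using this

lemma abs_mul_pow_lt {x p : ℝ} (hx : |x| < 1) (hp : |p| < 1) (k : ℕ) : |x * p ^ k| < 1 := by
  rw [abs_mul, abs_pow]
  calc |x| * |p| ^ k ≤ |x| * 1 := by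
        gcongr
        exact pow_le_one₀ (abs_nonneg _) hp.le
    _ < 1 := by simpa

lemma QP_pos {x p : ℝ} (hx : |x| < 1) (hp : |p| < 1) : 0 < QP x p := by
  have h1 : ∀ k : ℕ, 0 < 1 - x * p ^ k := fun k => by
    have := (abs_lt.1 (abs_mul_pow_lt hx hp k)).2
    linarith
  refine lt_of_le_of_ne ?_ (QP_ne_zero hp fun k => (h1 k).ne').symm
  exact ge_of_tendsto' (QP_tendsto x hp) fun n => Finset.prod_nonneg fun k _ => (h1 k).le

lemma EE_pos {q : ℝ} (hq : |q| < 1) : 0 < EE q := by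
  rw [EE_eq]; exact QP_pos hq hq

lemma abs_pow_lt {q : ℝ} (hq : |q| < 1) {n : ℕ} (hn : n ≠ 0) : |q ^ n| < 1 := by
  rw [abs_pow]; exact pow_lt_one₀ (abs_nonneg _) hq hn

lemma QP_head (x : ℝ) {p : ℝ} (hp : |p| < 1) : QP x p = (1 - x) * QP (x * p) p := by
  have h1 := (QP_tendsto x hp).comp (tendsto_add_atTop_nat 1)
  have h2 := (QP_tendsto (x * p) hp).const_mul (1 - x)
  refine tendsto_nhds_unique h1 (h2.congr fun n => ?_)
  simp only [Function.comp, Finset.prod_range_succ', pow_zero, mul_one, pow_succ]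
  rw [mul_comm]
  congr 1
  refine Finset.prod_congr rfl fun k _ => by ring

lemma QP_split2 (x : ℝ) {p : ℝ} (hp : |p| < 1) : QP x p = QP x (p ^ 2) * QP (x * p) (p ^ 2) := by
  have hp2 := abs_pow_lt hp (two_ne_zero)
  have h1 := (QP_tendsto x hp).comp (tendsto_id.const_mul_atTop' (r := 2) (by norm_num))
  have h2 := (QP_tendsto x hp2).mul (QP_tendsto (x * p) hp2)
  refine tendsto_nhds_unique h1 (h2.congr fun n => ?_)
  simp only [Function.comp, id]
  induction n with
  | zero => simp
  | succ n ih =>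
    rw [Finset.prod_range_succ, Finset.prod_range_succ, show 2 * (n + 1) = 2 * n + 1 + 1 by ring,
      Finset.prod_range_succ, Finset.prod_range_succ, ← ih]
    ring

lemma QP_split3 (x : ℝ) {p : ℝ} (hp : |p| < 1) :
    QP x p = QP x (p ^ 3) * QP (x * p) (p ^ 3) * QP (x * p ^ 2) (p ^ 3) := by
  have hp2 := abs_pow_lt hp (three_ne_zero)
  have h1 := (QP_tendsto x hp).comp (tendsto_id.const_mul_atTop' (r := 3) (by norm_num))
  have h2 := ((QP_tendsto x hp2).mul (QP_tendsto (x * p) hp2)).mul (QP_tendsto (x * p ^ 2) hp2)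
  refine tendsto_nhds_unique h1 (h2.congr fun n => ?_)
  simp only [Function.comp, id]
  induction n with
  | zero => simp
  | succ n ih =>
    rw [Finset.prod_range_succ, Finset.prod_range_succ, Finset.prod_range_succ,
      show 3 * (n + 1) = 3 * n + 1 + 1 + 1 by ring,
      Finset.prod_range_succ, Finset.prod_range_succ, Finset.prod_range_succ, ← ih]
    ring

lemma QP_neg (x : ℝ) {p : ℝ} (hp : |p| < 1) : QP x p * QP (-x) p = QP (x ^ 2) (p ^ 2) := by
  have hp2 := abs_pow_lt hp (two_ne_zero)
  have h1 := (QP_tendsto x hp).mul (QP_tendsto (-x) hp)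
  have h2 := QP_tendsto (x ^ 2) hp2
  refine tendsto_nhds_unique h1 (h2.congr fun n => ?_)
  rw [← Finset.prod_mul_distrib]
  refine Finset.prod_congr rfl fun k _ => by ring

/-- theta in product form -/
noncomputable def TH (p x : ℝ) : ℝ := EE p * QP x p * QP (p / x) p

lemma TH_refl {p x : ℝ} (hx : x ≠ 0) (hp0 : p ≠ 0) : TH p (p / x) = TH p x := by
  unfold TH
  rw [div_div_cancel₀ hp0]; ring

lemma TH_inv {p x : ℝ} (hx : x ≠ 0) (hp : |p| < 1) : x * TH p (1 / x) = - TH p x := by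
  unfold TH
  have h1 := QP_head x hp
  have h2 := QP_head (1 / x) hp
  rw [h1, h2, show p / (1 / x) = x * p by field_simp, show 1 / x * p = p / x by field_simp]
  field_simp
  ring

lemma TH_neg_one {p : ℝ} (hp : |p| < 1) : TH p (-1) = 2 * EE (p ^ 2) ^ 2 / EE p := by
  have h0 := (EE_pos hp).ne'
  unfold TH
  have h1 := QP_head (-1) hp
  have h2 := QP_neg p hp
  rw [← EE_eq, ← EE_eq] at h2
  rw [h1, ← h2]
  rw [show p / -1 = -p by ring, show (-1 : ℝ) * p = -p by ring]
  field_simp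
  ring

lemma TH_q {q : ℝ} (hq : |q| < 1) (h0 : q ≠ 0) : TH (q ^ 3) q = EE q := by
  unfold TH
  rw [EE_eq q, QP_split3 q hq, EE_eq, show q ^ 3 / q = q * q by field_simp,
    show q * q ^ 2 = q ^ 3 by ring]
  ring

lemma TH_neg_q {q : ℝ} (hq : |q| < 1) (h0 : q ≠ 0) :
    TH (q ^ 3) (-q) = EE (q ^ 2) * EE (q ^ 3) ^ 2 / (EE q * EE (q ^ 6)) := by
  have e1 := EE_pos hq
  have e6 := EE_pos (abs_pow_lt hq (n := 6) (by norm_num))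
  have h3 := abs_pow_lt hq (n := 3) (by norm_num)
  have h2 := abs_pow_lt hq (n := 2) (by norm_num)
  have a := TH_q hq h0
  have b := TH_q h2 (by positivity)
  rw [show (q ^ 2) ^ 3 = q ^ 6 by ring] at b
  rw [← a, ← b]
  have a1 : TH (q ^ 3) q ≠ 0 := by rw [a]; exact e1.ne'
  rw [eq_div_iff (by positivity)]
  unfold TH
  have n1 := QP_neg q h3
  have n2 := QP_neg (q ^ 2) h3
  rw [show (q ^ 3) ^ 2 = q ^ 6 by ring, ] at n1 n2
  rw [show q ^ 3 / q = q ^ 2 by field_simp, show q ^ 3 / -q = -(q ^ 2) by field_simp,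
    show q ^ 6 / q ^ 2 = (q ^ 2) ^ 2 by field_simp, ← n1, ← n2]
  ring

lemma EE_neg {q : ℝ} (hq : |q| < 1) : EE (-q) * EE q * EE (q ^ 4) = EE (q ^ 2) ^ 3 := by
  have hn : |-q| < 1 := by simpa
  have h2 := abs_pow_lt hq (n := 2) (by norm_num)
  have a := QP_split2 q hq
  have b := QP_split2 (-q) hn
  have c := QP_neg q h2
  have d := QP_split2 (q ^ 2) h2
  rw [show (-q) ^ 2 = q ^ 2 by ring, show -q * -q = q ^ 2 by ring, ← EE_eq, ← EE_eq] at b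
  rw [show q * q = q ^ 2 by ring, ← EE_eq, ← EE_eq] at a
  rw [show (q ^ 2) ^ 2 = q ^ 4 by ring] at c d
  rw [show q ^ 2 * q ^ 2 = q ^ 4 by ring, ← EE_eq, ← EE_eq] at d
  calc _ = (QP q (q ^ 2) * QP (-q) (q ^ 2) * EE (q ^ 4)) * EE (q ^ 2) ^ 2 := by rw [a, b]; ring
    _ = _ := by rw [c, ← d]; ring

lemma hp_pow {q : ℝ} (hq : |q| < 1) (n : ℕ) (hn : n ≠ 0) :
    HasProd (fun j : ℕ => 1 - q ^ (n * (j + 1))) (EE (q ^ n)) := by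
  have := EE_hasProd (abs_pow_lt hq hn)
  simpa only [← pow_mul] using this

lemma U1_eq {t : ℝ} (ht : |t| < 1) : U1 t = EE (t ^ 2) ^ 8 * EE (t ^ 3) ^ 6 / EE t ^ 10 := by
  have := (((hp_pow ht 2 (by norm_num)).pow 8).mul ((hp_pow ht 3 (by norm_num)).pow 6)).div₀
    ((EE_hasProd ht).pow 10) (pow_ne_zero _ (EE_pos ht).ne')
  exact this.tprod_eq

lemma V1_eq {t : ℝ} (ht : |t| < 1) :
    V1 t = t * (EE (t ^ 2) * EE (t ^ 6) ^ 5 / (EE t ^ 5 * EE (t ^ 3))) := by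
  have := (((hp_pow ht 2 (by norm_num))).mul ((hp_pow ht 6 (by norm_num)).pow 5)).div₀
    (((EE_hasProd ht).pow 5).mul (hp_pow ht 3 (by norm_num)))
    (mul_ne_zero (pow_ne_zero _ (EE_pos ht).ne') (EE_pos (abs_pow_lt ht (by norm_num))).ne')
  unfold V1
  congr 1
  exact this.tprod_eq

noncomputable def PF (p : ℝ) (m : ℕ) : ℝ := ∏ k ∈ Finset.range m, (1 - p ^ (k + 1))

noncomputable def gb (p : ℝ) : ℕ → ℕ → ℝ
  | _, 0 => 1
  | 0, _ + 1 => 0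
  | N + 1, k + 1 => gb p N (k + 1) + p ^ (N - k) * gb p N k

lemma gb_zero_right (p : ℝ) (N : ℕ) : gb p N 0 = 1 := by cases N <;> rfl

lemma gb_succ (p : ℝ) (N k : ℕ) :
    gb p (N + 1) (k + 1) = gb p N (k + 1) + p ^ (N - k) * gb p N k := rfl

lemma gb_eq_zero (p : ℝ) (N : ℕ) : ∀ k, N < k → gb p N k = 0 := by
  induction N with
  | zero => intro k hk; cases k with
    | zero => omega
    | succ k => rfl
  | succ N ih => intro k hk; cases k with
    | zero => omega
    | succ k => rw [gb_succ, ih _ (by omega), ih _ (by omega)]; simp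

lemma PF_succ (p : ℝ) (m : ℕ) : PF p (m + 1) = PF p m * (1 - p ^ (m + 1)) := by
  simp [PF, Finset.prod_range_succ]

lemma gb_closed (p : ℝ) (N : ℕ) : ∀ k ≤ N, gb p N k * PF p k * PF p (N - k) = PF p N := by
  induction N with
  | zero => intro k hk; obtain rfl : k = 0 := by omega
            simp [gb_zero_right, PF]
  | succ N ih =>
    intro k hk
    cases k with
    | zero => simp [gb_zero_right, PF]
    | succ k =>
      rw [gb_succ, Nat.add_sub_add_right]
      rcases Nat.lt_or_ge k N with h | h
      · have i1 := ih (k + 1) h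
        have i2 := ih k (by omega)
        obtain ⟨d, rfl⟩ : ∃ d, N = k + 1 + d := ⟨N - (k + 1), by omega⟩
        rw [show k + 1 + d - (k + 1) = d by omega] at i1
        rw [show k + 1 + d - k = d + 1 by omega] at i2 ⊢
        rw [PF_succ p k] at *
        rw [PF_succ p d] at *
        rw [PF_succ p (k + 1 + d)]
        have e : p ^ (k + 1 + d + 1) = p ^ (k + 1) * p ^ (d + 1) := by ring
        rw [e]
        linear_combination (1 - p ^ (d + 1)) * i1 + p ^ (d + 1) * (1 - p ^ (k + 1)) * i2
      · obtain rfl : k = N := by omega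
        have i2 := ih k le_rfl
        rw [gb_eq_zero p k (k + 1) (by omega), PF_succ]
        simp only [Nat.sub_self, pow_zero] at i2 ⊢
        linear_combination (1 - p ^ (k + 1)) * i2

lemma qbinom (p z : ℝ) (N : ℕ) : ∏ k ∈ Finset.range N, (1 + z * p ^ k) =
    ∑ k ∈ Finset.range (N + 1), gb p N k * p ^ (k.choose 2) * z ^ k := by
  induction N with
  | zero => simp [gb_zero_right]
  | succ N ih =>
    rw [Finset.prod_range_succ, ih, mul_add, mul_one, Finset.sum_range_succ' _ (N + 1)]
    have h1 : ∑ k ∈ Finset.range (N + 1), gb p N k * p ^ (k.choose 2) * z ^ k =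
        ∑ k ∈ Finset.range (N + 1), gb p N (k + 1) * p ^ ((k + 1).choose 2) * z ^ (k + 1) + 1 := by
      rw [Finset.sum_range_succ', Finset.sum_range_succ _ N, gb_eq_zero p N (N + 1) (by omega)]
      simp [gb_zero_right]
    rw [Finset.sum_mul]
    nth_rewrite 1 [h1]
    simp only [gb_zero_right, gb_succ]
    rw [add_right_comm, ← Finset.sum_add_distrib]
    congr 1
    · refine Finset.sum_congr rfl fun k hk => ?_
      have hk' : k ≤ N := by simpa [Nat.lt_succ_iff] using hk
      have e : p ^ (N - k) * p ^ ((k + 1).choose 2) = p ^ N * p ^ (k.choose 2) := by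
        rw [← pow_add, ← pow_add]
        congr 1
        have : (k + 1).choose 2 = k + k.choose 2 := by
          rw [Nat.choose_succ_succ' k 1]; simp
        omega
      linear_combination (-gb p N k * z ^ (k + 1)) * e
    · simp

/-- triangular exponent -/
def TT (j : ℤ) : ℤ := j * (j - 1) / 2

lemma two_TT (j : ℤ) : 2 * TT j = j * (j - 1) :=
  Int.mul_ediv_cancel' (Int.even_mul_pred_self j).two_dvd

lemma TT_nat (k : ℕ) : (TT k : ℤ) = (k.choose 2 : ℕ) := by
  have h := two_TT k
  have : 2 * ((k.choose 2 : ℕ) : ℤ) = k * (k - 1) := by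
    have := Nat.triangle_succ
    induction k with
    | zero => simp
    | succ k ih =>
      rw [Nat.choose_succ_succ' k 1]
      push_cast
      rw [mul_add, ih (two_TT k)]
      simp
      ring
  omega

lemma finite_jtp {p x : ℝ} (hp : p ≠ 0) (hx : x ≠ 0) (n : ℕ) :
    (∏ k ∈ Finset.range n, (1 - x * p ^ k)) * (∏ k ∈ Finset.range n, (1 - p / x * p ^ k)) =
    ∑ k ∈ Finset.range (2 * n + 1),
      gb p (2 * n) k * ((-x) ^ ((k : ℤ) - n) * p ^ TT ((k : ℤ) - n)) := by
  have h := qbinom p (-x * (p ^ n)⁻¹) (2 * n)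
  have hL : ∏ k ∈ Finset.range (2 * n), (1 + -x * (p ^ n)⁻¹ * p ^ k) =
      (-x) ^ n * (p ^ ((n + 1).choose 2))⁻¹ *
      ((∏ k ∈ Finset.range n, (1 - x * p ^ k)) * (∏ k ∈ Finset.range n, (1 - p / x * p ^ k))) := by
    rw [two_mul, Finset.prod_range_add, mul_comm]
    have e1 : ∏ k ∈ Finset.range n, (1 + -x * (p ^ n)⁻¹ * p ^ (n + k)) =
        ∏ k ∈ Finset.range n, (1 - x * p ^ k) := by
      refine Finset.prod_congr rfl fun k _ => ?_
      rw [pow_add]; field_simp; ring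
    have e2 : ∏ k ∈ Finset.range n, (1 + -x * (p ^ n)⁻¹ * p ^ k) =
        (-x) ^ n * (p ^ ((n + 1).choose 2))⁻¹ * ∏ k ∈ Finset.range n, (1 - p / x * p ^ k) := by
      rw [← Finset.prod_range_reflect]
      clear h e1
      have : ∀ k ∈ Finset.range n, (1 + -x * (p ^ n)⁻¹ * p ^ (n - 1 - k)) =
          (-x * (p ^ (k + 1))⁻¹) * (1 - p / x * p ^ k) := by
        intro k hk
        have hk' := Finset.mem_range.1 hk
        obtain ⟨d, rfl⟩ : ∃ d, n = d + (k + 1) := ⟨n - (k + 1), by omega⟩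
        rw [show d + (k + 1) - 1 - k = d by omega, pow_add]
        field_simp
        ring
      rw [Finset.prod_congr rfl this, Finset.prod_mul_distrib]
      congr 1
      clear this
      induction n with
      | zero => simp
      | succ n ih =>
        rw [Finset.prod_range_succ, ih, Nat.choose_succ_succ' (n + 1) 1]
        simp only [Nat.choose_one_right, Nat.reduceAdd]
        rw [pow_add p, pow_succ (-x)]
        field_simp
        ring
    rw [e1, e2]; ring
  rw [hL] at h
  have hc : (-x) ^ n * (p ^ ((n + 1).choose 2))⁻¹ ≠ 0 := by
    have : -x ≠ 0 := neg_ne_zero.2 hx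
    positivity
  apply mul_left_cancel₀ hc
  rw [h, Finset.mul_sum]
  refine Finset.sum_congr rfl fun k _ => ?_
  have hx' : -x ≠ 0 := neg_ne_zero.2 hx
  rw [mul_pow]
  have e1 : (-x) ^ k = (-x) ^ n * (-x) ^ ((k : ℤ) - n) := by
    rw [← zpow_natCast, ← zpow_natCast, ← zpow_add₀ hx']; congr 1; ring
  have e2 : p ^ (k.choose 2) * ((p ^ n)⁻¹) ^ k =
      (p ^ ((n + 1).choose 2))⁻¹ * p ^ TT ((k : ℤ) - n) := by
    rw [inv_pow, ← pow_mul]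
    rw [← zpow_natCast, ← zpow_natCast, ← zpow_natCast, ← zpow_neg, ← zpow_neg, ← zpow_add₀ hp,
      ← zpow_add₀ hp]
    congr 1
    rw [← TT_nat, ← TT_nat]
    have a := two_TT k
    have b := two_TT ((k : ℤ) - n)
    have c := two_TT ((n + 1 : ℕ) : ℤ)
    push_cast at *
    nlinarith
  rw [e1]
  linear_combination (gb p (2 * n) k * (-x) ^ n * (-x) ^ ((k : ℤ) - n)) * e2

lemma summable_aux (a : ℝ) {r : ℝ} (hr : |r| < 1) :
    Summable fun m : ℕ => a ^ m * r ^ (m.choose 2) := by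
  by_cases ha : a = 0
  · subst ha
    refine summable_of_ne_finset_zero (s := {0}) fun b hb => ?_
    simp at hb; simp [hb]
  by_cases hr0 : r = 0
  · subst hr0
    refine summable_of_ne_finset_zero (s := {0, 1}) fun b hb => ?_
    simp at hb
    have : b.choose 2 ≠ 0 := (Nat.choose_pos (by omega)).ne'
    simp [this]
  refine summable_of_ratio_test_tendsto_lt_one (l := 0) (by norm_num) ?_ ?_
  · exact Eventually.of_forall fun n => by positivity
  · have : Tendsto (fun n : ℕ => ‖a‖ * |r| ^ n) atTop (𝓝 (‖a‖ * 0)) :=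
      (tendsto_pow_atTop_nhds_zero_of_lt_one (abs_nonneg r) hr).const_mul _
    rw [mul_zero] at this
    refine this.congr fun n => ?_
    rw [Nat.choose_succ_succ' n 1, Nat.choose_one_right]
    simp only [norm_mul, norm_pow, Real.norm_eq_abs, pow_add, pow_one]
    have : |a| ≠ 0 := by positivity
    have : |r| ≠ 0 := by positivity
    field_simp

lemma th_summable {p x : ℝ} (hp1 : |p| < 1) (hp : p ≠ 0) (hx : x ≠ 0) :
    Summable fun j : ℤ => (-x) ^ j * p ^ TT j := by
  refine Summable.of_nat_of_neg ?_ ?_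
  · refine (summable_aux (-x) hp1).congr fun m => ?_
    rw [TT_nat, zpow_natCast, zpow_natCast]
  · refine (summable_aux ((-x)⁻¹ * p) hp1).congr fun m => ?_
    rw [mul_pow, mul_assoc, ← pow_add, zpow_neg, zpow_natCast, inv_pow]
    congr 1
    rw [← zpow_natCast]
    congr 1
    have a := two_TT m
    have b := two_TT (-m)
    push_cast
    rw [← TT_nat]
    nlinarith

lemma PF_tendsto {p : ℝ} (hp : |p| < 1) : Tendsto (PF p) atTop (𝓝 (EE p)) :=
  (EE_hasProd hp).tendsto_prod_nat

lemma PF_ne {p : ℝ} (hp : |p| < 1) (m : ℕ) : PF p m ≠ 0 := by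
  refine Finset.prod_ne_zero_iff.2 fun k _ => ?_
  have := (abs_lt.1 (abs_pow_lt hp (Nat.succ_ne_zero k))).2
  simp only [Nat.succ_eq_add_one] at this
  linarith

lemma gb_eq {p : ℝ} (hp : |p| < 1) {N k : ℕ} (h : k ≤ N) :
    gb p N k = PF p N * (PF p k)⁻¹ * (PF p (N - k))⁻¹ := by
  have := gb_closed p N k h
  have h1 := PF_ne hp k
  have h2 := PF_ne hp (N - k)
  rw [← this]; field_simp

theorem jtp {p x : ℝ} (hp1 : |p| < 1) (hp : p ≠ 0) (hx : x ≠ 0) :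
    HasSum (fun j : ℤ => (-x) ^ j * p ^ TT j) (TH p x) := by
  have hE := (EE_pos hp1).ne'
  have hs := th_summable hp1 hp hx
  have hinv : Tendsto (fun m => (PF p m)⁻¹) atTop (𝓝 (EE p)⁻¹) := (PF_tendsto hp1).inv₀ hE
  obtain ⟨M1, hM1⟩ := (PF_tendsto hp1).norm.bddAbove_range
  obtain ⟨M2, hM2⟩ := hinv.norm.bddAbove_range
  have hM1' : ∀ m, ‖PF p m‖ ≤ M1 := fun m => hM1 ⟨m, rfl⟩
  have hM2' : ∀ m, ‖(PF p m)⁻¹‖ ≤ M2 := fun m => hM2 ⟨m, rfl⟩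
  have hM10 : 0 ≤ M1 := (norm_nonneg _).trans (hM1' 0)
  have hM20 : 0 ≤ M2 := (norm_nonneg _).trans (hM2' 0)
  let F : ℕ → ℤ → ℝ := fun n j => if -(n : ℤ) ≤ j ∧ j ≤ n then
    gb p (2 * n) (n + j).toNat * ((-x) ^ j * p ^ TT j) else 0
  have key : ∀ n, ∑' j, F n j =
      (∏ k ∈ Finset.range n, (1 - x * p ^ k)) * (∏ k ∈ Finset.range n, (1 - p / x * p ^ k)) := by
    intro n
    rw [finite_jtp hp hx, tsum_eq_sum (s := Finset.Icc (-(n : ℤ)) n)]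
    · refine Finset.sum_nbij' (fun j => (n + j).toNat) (fun k => (k : ℤ) - n) ?_ ?_ ?_ ?_ ?_
      · intro j hj; simp only [Finset.mem_Icc, Finset.mem_range] at *; omega
      · intro j hj; simp only [Finset.mem_Icc, Finset.mem_range] at *; omega
      · intro j hj; simp only [Finset.mem_Icc, Finset.mem_range] at *; omega
      · intro j hj; simp only [Finset.mem_range] at *; omega
      · intro j hj
        have hj' := Finset.mem_Icc.1 hj
        simp only [F, if_pos hj']
        rw [show (((n + j).toNat : ℕ) : ℤ) - n = j by omega]
    · intro j hj
      simp only [F]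
      rw [if_neg]
      simpa using hj
  have lim : Tendsto (fun n => ∑' j, F n j) atTop
      (𝓝 (∑' j : ℤ, (EE p)⁻¹ * ((-x) ^ j * p ^ TT j))) := by
    refine tendsto_tsum_of_dominated_convergence
      (bound := fun j : ℤ => M1 * M2 * M2 * ‖(-x) ^ j * p ^ TT j‖) (hs.norm.mul_left _) ?_ ?_
    · intro j
      have h1 : Tendsto (fun n : ℕ => PF p (2 * n)) atTop (𝓝 (EE p)) :=
        (PF_tendsto hp1).comp (tendsto_id.const_mul_atTop' (by norm_num))
      have h2 : Tendsto (fun n : ℕ => (PF p ((n : ℤ) + j).toNat)⁻¹) atTop (𝓝 (EE p)⁻¹) := by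
        refine hinv.comp (tendsto_atTop.2 fun b => ?_)
        filter_upwards [eventually_ge_atTop (b + j.natAbs)] with n hn
        omega
      have h3 : Tendsto (fun n : ℕ => (PF p (2 * n - ((n : ℤ) + j).toNat))⁻¹) atTop
          (𝓝 (EE p)⁻¹) := by
        refine hinv.comp (tendsto_atTop.2 fun b => ?_)
        filter_upwards [eventually_ge_atTop (b + j.natAbs)] with n hn
        omega
      have h4 := ((h1.mul h2).mul h3).mul_const ((-x) ^ j * p ^ TT j)
      rw [mul_inv_cancel₀ hE, one_mul] at h4
      refine h4.congr' ?_
      filter_upwards [eventually_ge_atTop j.natAbs] with n hn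
      simp only [F]
      rw [if_pos (by omega), gb_eq hp1 (by omega)]
    · refine Eventually.of_forall fun n j => ?_
      simp only [F]
      split_ifs with h
      · rw [norm_mul]
        gcongr
        rw [gb_eq hp1 (by omega), norm_mul, norm_mul]
        gcongr <;> first | apply hM1' | apply hM2'
      · rw [norm_zero]; positivity
  have lim2 := (QP_tendsto x hp1).mul (QP_tendsto (p / x) hp1)
  have := tendsto_nhds_unique lim (lim2.congr fun n => (key n).symm)
  rw [tsum_mul_left] at this
  have h5 : ∑' j : ℤ, (-x) ^ j * p ^ TT j = TH p x := by
    unfold TH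
    rw [mul_assoc, ← this]; field_simp
  rw [← h5]
  exact hs.hasSum

noncomputable def S0 (p y : ℝ) : ℝ := ∑' m : ℤ, p ^ (m * m) * y ^ (2 * m)
noncomputable def S1 (p y : ℝ) : ℝ := ∑' m : ℤ, p ^ (m * m + m) * y ^ (2 * m + 1)
noncomputable def DD (p x y : ℝ) : ℝ := S1 p x * S0 p y - S0 p x * S1 p y

lemma S1_hs {p y : ℝ} (hp1 : |p| < 1) (hp : p ≠ 0) (hy : y ≠ 0) :
    HasSum (fun m : ℤ => p ^ (m * m + m) * y ^ (2 * m + 1)) (S1 p y) := by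
  have h := th_summable (p := p ^ 2) (x := -(y ^ 2 * p ^ 2)) (abs_pow_lt hp1 two_ne_zero)
    (pow_ne_zero _ hp) (by simp [hp, hy])
  refine Summable.hasSum ((h.mul_right y).congr fun m => ?_)
  rw [neg_neg, mul_zpow, ← zpow_natCast, ← zpow_natCast, ← zpow_mul, ← zpow_mul, ← zpow_mul,
    zpow_add₀ hy, zpow_one, show ((2 : ℕ) : ℤ) * TT m = m * (m - 1) from two_TT m]
  rw [show m * m + m = (2 : ℕ) * m + m * (m - 1) by push_cast; ring, zpow_add₀ hp]
  push_cast
  ring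

lemma S0_hs {p y : ℝ} (hp1 : |p| < 1) (hp : p ≠ 0) (hy : y ≠ 0) :
    HasSum (fun m : ℤ => p ^ (m * m) * y ^ (2 * m)) (S0 p y) := by
  have h := th_summable (p := p ^ 2) (x := -(y ^ 2 * p)) (abs_pow_lt hp1 two_ne_zero)
    (pow_ne_zero _ hp) (by simp [hp, hy])
  refine Summable.hasSum (h.congr fun m => ?_)
  rw [neg_neg, mul_zpow, ← zpow_natCast, ← zpow_natCast, ← zpow_mul, ← zpow_mul,
    show ((2 : ℕ) : ℤ) * TT m = m * (m - 1) from two_TT m]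
  rw [show m * m = m + m * (m - 1) by ring, zpow_add₀ hp]
  push_cast
  ring

def pe : (ℤ × ℤ) ⊕ (ℤ × ℤ) ≃ ℤ × ℤ where
  toFun := Sum.elim (fun a => (a.1 + a.2, a.1 - a.2)) (fun a => (a.1 + a.2 + 1, a.1 - a.2))
  invFun m := if (m.1 + m.2) % 2 = 0 then Sum.inl ((m.1 + m.2) / 2, (m.1 - m.2) / 2)
    else Sum.inr ((m.1 + m.2) / 2, (m.1 - m.2) / 2)
  left_inv := by
    rintro (⟨a, b⟩ | ⟨a, b⟩)
    · change (if (a + b + (a - b)) % 2 = 0 then Sum.inl ((a + b + (a - b)) / 2, (a + b - (a - b)) / 2) else Sum.inr ((a + b + (a - b)) / 2, (a + b - (a - b)) / 2)) = _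
      rw [if_pos (by omega)]
      congr 2 <;> omega
    · change (if (a + b + 1 + (a - b)) % 2 = 0 then Sum.inl ((a + b + 1 + (a - b)) / 2, (a + b + 1 - (a - b)) / 2) else Sum.inr ((a + b + 1 + (a - b)) / 2, (a + b + 1 - (a - b)) / 2)) = _
      rw [if_neg (by omega)]
      congr 2 <;> omega
  right_inv := by
    rintro ⟨m, n⟩
    dsimp only
    split_ifs with h
    · simp only [Sum.elim_inl]
      congr 1 <;> omega
    · simp only [Sum.elim_inr]
      congr 1 <;> omega

lemma hasSum_sumtype {α β : Type*} {f : α ⊕ β → ℝ} {a b : ℝ}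
    (h1 : HasSum (fun x => f (Sum.inl x)) a) (h2 : HasSum (fun x => f (Sum.inr x)) b) :
    HasSum f (a + b) := by
  refine HasSum.add_isCompl (s := Set.range Sum.inl) (t := Set.range Sum.inr)
    Set.isCompl_range_inl_range_inr ?_ ?_
  · exact (Function.Injective.hasSum_range_iff (f := f) Sum.inl_injective).2 h1
  · exact (Function.Injective.hasSum_range_iff (f := f) Sum.inr_injective).2 h2

lemma hs_mul {f g : ℤ → ℝ} {a b : ℝ} (hf : HasSum f a) (hg : HasSum g b) :
    HasSum (fun z : ℤ × ℤ => f z.1 * g z.2) (a * b) :=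
  hf.mul hg (summable_mul_of_summable_norm hf.summable.norm hg.summable.norm)

lemma hs_mul_left {ι : Type*} {f : ι → ℝ} {a : ℝ} (c : ℝ) (hf : HasSum f a) :
    HasSum (fun z => c * f z) (c * a) := hf.mul_left c

lemma hs_congr {ι : Type*} {f g : ι → ℝ} {a : ℝ} (h : HasSum g a) (e : ∀ i, f i = g i) :
    HasSum f a := (funext e : f = g) ▸ h

set_option maxHeartbeats 2000000 in
lemma TH_mul {p x y : ℝ} (hp1 : |p| < 1) (hp : p ≠ 0) (hx : x ≠ 0) (hy : y ≠ 0) :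
    TH p (x * y) * TH p (x / y) = x * DD p x y := by
  have h1 := jtp hp1 hp (mul_ne_zero hx hy)
  have h2 := jtp hp1 hp (div_ne_zero hx hy)
  have h := hs_mul h1 h2
  have a0 := S0_hs hp1 hp hx
  have a1 := S1_hs hp1 hp hx
  have b0 := S0_hs hp1 hp hy
  have b1 := S1_hs hp1 hp hy
  have a1' : HasSum (fun m : ℤ => p ^ ((m - 1) * (m - 1) + (m - 1)) * x ^ (2 * (m - 1) + 1))
      (S1 p x) := (Equiv.subRight (1 : ℤ)).hasSum_iff.2 a1
  have c0 := hs_mul a1' b0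
  have c1 := hs_mul a0 b1
  have d0 := hs_mul_left x c0
  have d1 := hs_mul_left (-x) c1
  clear c0 c1 a0 a1 b0 b1 a1' h1 h2
  have hm : ∀ m n : ℤ, (-(x * y)) ^ m * p ^ TT m * ((-(x / y)) ^ n * p ^ TT n) =
      (-1) ^ (m + n) * x ^ (m + n) * y ^ (m - n) * p ^ (TT m + TT n) := by
    intro m n
    rw [neg_eq_neg_one_mul (x * y), neg_eq_neg_one_mul (x / y), mul_zpow, mul_zpow, mul_zpow,
      div_zpow, zpow_add₀ (by norm_num), zpow_add₀ hx, zpow_add₀ hp, zpow_sub₀ hy]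
    ring
  set f : ℤ × ℤ → ℝ := fun z => 
    (-(x * y)) ^ z.1 * p ^ TT z.1 * ((-(x / y)) ^ z.2 * p ^ TT z.2) with hf
  have hs : HasSum (f ∘ pe) (x * (S1 p x * S0 p y) + - x * (S0 p x * S1 p y)) := by
    apply hasSum_sumtype
    · refine hs_congr d0 fun z => ?_
      obtain ⟨a, b⟩ := z
      change f (a + b, a - b) = _
      simp only [hf]
      rw [hm]
      have e : TT (a + b) + TT (a - b) = ((a - 1) * (a - 1) + (a - 1)) + b * b := by
        have := two_TT (a + b)
        have := two_TT (a - b)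
        nlinarith
      rw [e, show a + b + (a - b) = 2 * a by ring, show a + b - (a - b) = 2 * b by ring,
        zpow_add₀ hp (_ + _), show x ^ (2 * a) = x * x ^ (2 * (a - 1) + 1) by
          rw [← zpow_one_add₀ hx]; congr 1; ring, (even_two_mul a).neg_one_zpow]
      ring
    · refine hs_congr d1 fun z => ?_
      obtain ⟨a, b⟩ := z
      change f (a + b + 1, a - b) = _
      simp only [hf]
      rw [hm]
      have e : TT (a + b + 1) + TT (a - b) = a * a + (b * b + b) := by
        have := two_TT (a + b + 1)
        have := two_TT (a - b)
        nlinarith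
      rw [e, show a + b + 1 + (a - b) = 2 * a + 1 by ring,
        show a + b + 1 - (a - b) = 2 * b + 1 by ring,
        zpow_add₀ hp, zpow_add₀ hx, zpow_one, (odd_two_mul_add_one a).neg_one_zpow]
      ring
  have := ((Equiv.hasSum_iff pe).1 hs).unique h
  rw [← this, DD]; ring

lemma plucker (p x y z w : ℝ) :
    DD p x y * DD p z w - DD p x z * DD p y w + DD p x w * DD p y z = 0 := by
  unfold DD; ring

lemma one_add_V {q : ℝ} (hq : |q| < 1) (h0 : q ≠ 0) :
    1 + 8 * V1 q = EE (q ^ 2) ^ 4 * EE (q ^ 3) ^ 8 / (EE q ^ 8 * EE (q ^ 6) ^ 4) := by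
  have hp1 : |q ^ 3| < 1 := abs_pow_lt hq (by norm_num)
  have hp0 : q ^ 3 ≠ 0 := pow_ne_zero _ h0
  have hn : -q ≠ 0 := neg_ne_zero.2 h0
  have h1 : (1 : ℝ) ≠ 0 := one_ne_zero
  have hm1 : (-1 : ℝ) ≠ 0 := by norm_num
  set a := TH (q ^ 3) q with ha
  set b := TH (q ^ 3) (-q) with hb
  set c := TH (q ^ 3) (-1) with hc
  have ia := TH_inv h0 hp1
  have ib := TH_inv hn hp1
  have d1 := TH_mul hp1 hp0 hm1 h0
  have d2 := TH_mul hp1 hp0 hn h1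
  have d3 := TH_mul hp1 hp0 hm1 hn
  have d4 := TH_mul hp1 hp0 h0 h1
  have d5 := TH_mul hp1 hp0 hm1 h1
  have d6 := TH_mul hp1 hp0 h0 hn
  have r := TH_refl (p := q ^ 3) hn hp0
  rw [show q ^ 3 / -q = q * -q by field_simp] at r
  rw [show (-1 : ℝ) * q = -q by ring, show (-1 : ℝ) / q = 1 / -q by field_simp] at d1
  rw [mul_one, div_one] at d2 d4 d5
  rw [show (-1 : ℝ) * -q = q by ring, show (-1 : ℝ) / -q = 1 / q by field_simp] at d3
  rw [r, show q / -q = -1 by field_simp] at d6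
  have pl := plucker (q ^ 3) (-1) q (-q) 1
  have key : b ^ 4 - a ^ 4 = q * b * c ^ 3 := by
    rw [← ha] at *
    rw [← hb] at *
    rw [← hc] at *
    have e1 : q * DD (q ^ 3) (-1) q = - b ^ 2 := by linear_combination b * ib + q * d1
    have e2 : q * DD (q ^ 3) (-q) 1 = - b ^ 2 := by linear_combination d2
    have e3 : q * DD (q ^ 3) (-1) (-q) = a ^ 2 := by linear_combination q * d3 - a * ia
    have e4 : q * DD (q ^ 3) q 1 = a ^ 2 := by linear_combination -d4
    have e5 : DD (q ^ 3) (-1) 1 = - c ^ 2 := by linear_combination d5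
    have e6 : q * DD (q ^ 3) q (-q) = b * c := by linear_combination -d6
    have : q ^ 2 * (0 : ℝ) = 0 := by ring
    rw [← pl] at this
    have h : (q * DD (q ^ 3) (-1) q) * (q * DD (q ^ 3) (-q) 1) -
      (q * DD (q ^ 3) (-1) (-q)) * (q * DD (q ^ 3) q 1) +
      q * DD (q ^ 3) (-1) 1 * (q * DD (q ^ 3) q (-q)) = 0 := by linear_combination q ^ 2 * pl
    rw [e1, e2, e3, e4, e5, e6] at h
    linear_combination h
  rw [ha, hb, hc, TH_q hq h0, TH_neg_q hq h0, TH_neg_one hp1, ← pow_mul] at key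
  rw [V1_eq hq]
  have p1 := (EE_pos hq).ne'
  have p2 := (EE_pos (abs_pow_lt hq (n := 2) (by norm_num))).ne'
  have p3 := (EE_pos (abs_pow_lt hq (n := 3) (by norm_num))).ne'
  have p6 := (EE_pos (abs_pow_lt hq (n := 6) (by norm_num))).ne'
  norm_num at key
  field_simp at key ⊢
  linear_combination -key

lemma prod_bound {ι : Type*} (f : ι → ℝ) (s : Finset ι) :
    |∏ i ∈ s, (1 + f i) - 1| ≤ exp (∑ i ∈ s, |f i|) - 1 ∧
    |∏ i ∈ s, (1 + f i) - 1 - ∑ i ∈ s, f i| ≤ exp (∑ i ∈ s, |f i|) - 1 - ∑ i ∈ s, |f i| := by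
  classical
  induction s using Finset.induction_on with
  | empty => simp
  | insert a s ha ih =>
    rw [Finset.prod_insert ha, Finset.sum_insert ha, Finset.sum_insert ha]
    obtain ⟨i1, i2⟩ := ih
    set P := ∏ i ∈ s, (1 + f i)
    set S := ∑ i ∈ s, f i
    set A := ∑ i ∈ s, |f i|
    have h1 : exp A * (1 + |f a|) ≤ exp (|f a| + A) := by
      rw [exp_add, mul_comm]
      gcongr
      linarith [add_one_le_exp |f a|]
    have h2 : |f a * (P - 1)| ≤ |f a| * (exp A - 1) := by
      rw [abs_mul]; gcongr
    constructor
    · calc |(1 + f a) * P - 1| = |(P - 1) + f a * (P - 1) + f a| := by congr 1; ring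
        _ ≤ |P - 1| + |f a * (P - 1)| + |f a| := by
          refine (abs_add_le _ _).trans ?_
          gcongr
          exact abs_add_le _ _
        _ ≤ _ := by linarith
    · calc |(1 + f a) * P - 1 - (f a + S)| = |(P - 1 - S) + f a * (P - 1)| := by congr 1; ring
        _ ≤ |P - 1 - S| + |f a * (P - 1)| := abs_add_le _ _
        _ ≤ _ := by linarith

noncomputable def FP (c : ℕ → ℝ) (e : ℝ) : ℝ := ∏' k, (1 - e * c k)

lemma FP_hasProd {c : ℕ → ℝ} (hc : Summable c) (e : ℝ) :
    HasProd (fun k => 1 - e * c k) (FP c e) := by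
  have : Multipliable fun k => 1 + -(e * c k) :=
    Real.multipliable_one_add_of_summable (hc.mul_left e).neg
  simpa [sub_eq_add_neg, FP] using this.hasProd

lemma FP_zero (c : ℕ → ℝ) : FP c 0 = 1 := by simp [FP]

lemma FP_bound {c : ℕ → ℝ} (hc : Summable c) (e : ℝ) :
    |FP c e - 1 + e * ∑' k, c k| ≤ exp (|e| * ∑' k, |c k|) - 1 - |e| * ∑' k, |c k| := by
  have h1 := FP_hasProd hc e
  have h2 := (hc.hasSum.mul_left (-e))
  have h3 := (hc.abs.hasSum.mul_left |e|)
  have l1 := ((h1.sub_const 1).sub h2).abs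
  have l2 := (((continuous_exp.tendsto _).comp h3).sub_const 1).sub h3
  have := le_of_tendsto_of_tendsto' l1 l2 fun s => ?_
  · rw [show FP c e - 1 + e * ∑' k, c k = FP c e - 1 - -e * ∑' k, c k by ring]; exact this
  · have := (prod_bound (fun k => -e * c k) s).2
    simp only [abs_mul, abs_neg] at this
    simp only [← Finset.mul_sum, neg_mul] at this ⊢
    simpa [sub_eq_add_neg, Finset.mul_sum] using this

lemma FP_deriv {c : ℕ → ℝ} (hc : Summable c) : HasDerivAt (FP c) (-∑' k, c k) 0 := by
  rw [hasDerivAt_iff_isLittleO]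
  set C := ∑' k, |c k|
  have hC : 0 ≤ C := tsum_nonneg fun _ => abs_nonneg _
  have : (fun e : ℝ => FP c e - FP c 0 - (e - 0) • (-∑' k, c k)) =O[𝓝 0] fun e => e ^ 2 := by
    refine Asymptotics.IsBigO.of_bound (C ^ 2) ?_
    have hev : ∀ᶠ e : ℝ in 𝓝 0, |e| * C ≤ 1 := by
      have : Tendsto (fun e : ℝ => |e| * C) (𝓝 0) (𝓝 (|0| * C)) :=
        (continuous_abs.mul continuous_const).tendsto 0
      rw [abs_zero, zero_mul] at this
      exact (this.eventually (gt_mem_nhds one_pos)).mono fun _ h => le_of_lt h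
    filter_upwards [hev] with e he
    have b := FP_bound hc e
    have b2 := Real.abs_exp_sub_one_sub_id_le (x := |e| * C) (by rwa [abs_of_nonneg (by positivity)])
    rw [FP_zero, Real.norm_eq_abs]
    calc _ = |FP c e - 1 + e * ∑' k, c k| := by congr 1; simp
      _ ≤ _ := b
      _ ≤ _ := le_abs_self _
      _ ≤ _ := b2
      _ = _ := by rw [mul_pow, norm_pow, Real.norm_eq_abs]; ring
  refine this.trans_isLittleO ?_
  simpa using (Asymptotics.isLittleO_pow_id (n := 2) (𝕜 := ℝ) (by norm_num))

noncomputable def cc (u : ℝ) : ℝ := u / (1 - u) ^ 2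

lemma cc_summable (x : ℝ) {p : ℝ} (hp : |p| < 1) : Summable fun k : ℕ => cc (x * p ^ k) := by
  have hs : Summable fun k : ℕ => x * p ^ k := (summable_geometric_of_abs_lt_one hp).mul_left x
  refine summable_of_isBigO_nat hs ?_
  have ht := hs.tendsto_atTop_zero
  have h1 : Tendsto (fun k : ℕ => ((1 - x * p ^ k) ^ 2)⁻¹) atTop (𝓝 (((1 - 0) ^ 2)⁻¹)) :=
    ((ht.const_sub 1).pow 2).inv₀ (by norm_num)
  have := (Asymptotics.isBigO_refl (fun k : ℕ => x * p ^ k) atTop).mul (h1.isBigO_one ℝ)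
  simpa [cc, div_eq_mul_inv] using this

lemma QP_zero_of {x p : ℝ} (h : QP x p ≠ 0) (k : ℕ) : 1 - x * p ^ k ≠ 0 := by
  intro hk
  exact h (tprod_of_exists_eq_zero ⟨k, hk⟩)

lemma QP_pair {x p z : ℝ} (hp : |p| < 1) (hx : QP x p ≠ 0) (hz : z ≠ 0) :
    QP (x * z) p * QP (x / z) p = QP x p ^ 2 * FP (fun k => cc (x * p ^ k)) (z + 1 / z - 2) := by
  have h1 := (QP_hasProd (x * z) hp).mul (QP_hasProd (x / z) hp)
  have h2 := ((QP_hasProd x hp).mul (QP_hasProd x hp)).mul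
    (FP_hasProd (cc_summable x hp) (z + 1 / z - 2))
  rw [pow_two]
  refine h1.unique ?_
  convert h2 using 2 with k
  have := QP_zero_of hx k
  unfold cc
  field_simp
  ring

noncomputable def LL (p x : ℝ) : ℝ := ∑' k : ℕ, cc (x * p ^ k) + ∑' k : ℕ, cc (p / x * p ^ k)

noncomputable def GF (p x e : ℝ) : ℝ :=
  FP (fun k => cc (x * p ^ k)) e * FP (fun k => cc (p / x * p ^ k)) e

lemma GF_deriv {p : ℝ} (x : ℝ) (hp : |p| < 1) : HasDerivAt (GF p x) (-LL p x) 0 := by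
  have := (FP_deriv (cc_summable x hp)).mul (FP_deriv (cc_summable (p / x) hp))
  rw [FP_zero, FP_zero] at this
  refine HasDerivAt.congr_deriv (f := GF p x) this ?_
  unfold LL; ring

lemma TH_pair {x p z : ℝ} (hp : |p| < 1) (hx0 : x ≠ 0) (hx : TH p x ≠ 0) (hz : z ≠ 0) :
    TH p (x * z) * TH p (x / z) = TH p x ^ 2 * GF p x (z + 1 / z - 2) := by
  unfold TH at hx ⊢
  have a := QP_pair hp (right_ne_zero_of_mul (left_ne_zero_of_mul hx)) hz
  have b := QP_pair hp (right_ne_zero_of_mul hx) hz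
  rw [show p / (x * z) = p / x / z by field_simp, show p / (x / z) = p / x * z by field_simp]
  unfold GF
  linear_combination (EE p ^ 2 * (QP (p / x / z) p * QP (p / x * z) p)) * a +
    EE p ^ 2 * (QP x p ^ 2 * FP (fun k => cc (x * p ^ k)) (z + 1 / z - 2)) * b

lemma TH_sq {p z : ℝ} (hp : |p| < 1) (hz : z ≠ 0) :
    TH p z ^ 2 = z * ((z + 1 / z - 2) * EE p ^ 6 *
      FP (fun k => cc (p * p ^ k)) (z + 1 / z - 2) ^ 2) := by
  have hE : QP p p ≠ 0 := by rw [← EE_eq]; exact (EE_pos hp).ne'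
  have a := QP_pair hp hE hz
  rw [← EE_eq] at a
  unfold TH
  rw [QP_head z hp, mul_comm z p]
  have : (EE p * ((1 - z) * QP (p * z) p) * QP (p / z) p) =
    EE p * (1 - z) * (QP (p * z) p * QP (p / z) p) := by ring
  rw [this, a]
  field_simp
  ring

lemma exists_z {e : ℝ} (he : 0 < e) : ∃ z : ℝ, z ≠ 0 ∧ z + 1 / z - 2 = e := by
  have h := Real.sq_sqrt (show 0 ≤ e + e ^ 2 / 4 by positivity)
  set r := √(e + e ^ 2 / 4)
  have hr : 0 ≤ r := Real.sqrt_nonneg _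
  have hz : 1 + e / 2 + r ≠ 0 := by positivity
  refine ⟨1 + e / 2 + r, hz, ?_⟩
  field_simp
  linear_combination 4 * h

theorem lambert {p x y : ℝ} (hp : |p| < 1) (hp0 : p ≠ 0) (hx0 : x ≠ 0) (hy0 : y ≠ 0)
    (hx : TH p x ≠ 0) (hy : TH p y ≠ 0) :
    LL p y - LL p x = y * EE p ^ 6 * TH p (x * y) * TH p (x / y) / (TH p x ^ 2 * TH p y ^ 2) := by
  set K := y * EE p ^ 6 * TH p (x * y) * TH p (x / y) / (TH p x ^ 2 * TH p y ^ 2) with hK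
  have key : ∀ e : ℝ, 0 < e →
      GF p x e - GF p y e = e * (K * FP (fun k => cc (p * p ^ k)) e ^ 2) := by
    intro e he
    obtain ⟨z, hz, hze⟩ := exists_z he
    have a := TH_pair hp hx0 hx hz
    have b := TH_pair hp hy0 hy hz
    have c := TH_sq hp hz
    rw [hze] at a b c
    have pl := plucker p x y z 1
    have d1 := TH_mul hp hp0 hx0 hy0
    have d2 := TH_mul hp hp0 hx0 hz
    have d3 := TH_mul hp hp0 hy0 hz
    have d4 := TH_mul hp hp0 hx0 one_ne_zero
    have d5 := TH_mul hp hp0 hy0 one_ne_zero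
    have d6 := TH_mul hp hp0 hz one_ne_zero
    rw [mul_one, div_one] at d4 d5 d6
    rw [a] at d2
    rw [b] at d3
    rw [← pow_two] at d4 d5 d6
    rw [c] at d6
    have d6' := mul_left_cancel₀ hz d6
    have e1 : DD p x y = TH p (x * y) * TH p (x / y) / x := by rw [d1]; field_simp
    have e2 : DD p x z = TH p x ^ 2 * GF p x e / x := by rw [d2]; field_simp
    have e3 : DD p y z = TH p y ^ 2 * GF p y e / y := by rw [d3]; field_simp
    have e4 : DD p x 1 = TH p x ^ 2 / x := by rw [d4]; field_simp
    have e5 : DD p y 1 = TH p y ^ 2 / y := by rw [d5]; field_simp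
    rw [e1, e2, e3, e4, e5, ← d6'] at pl
    rw [hK]
    field_simp at pl ⊢
    linear_combination -pl
  have l1 : Tendsto (fun e : ℝ => e⁻¹ * (GF p x e - GF p y e)) (𝓝[>] 0)
      (𝓝 (-LL p x - -LL p y)) := by
    have := ((GF_deriv x hp).sub (GF_deriv y hp)).tendsto_slope_zero_right
    refine this.congr fun e => ?_
    simp [GF, FP_zero]
  have l2 : Tendsto (fun e : ℝ => K * FP (fun k => cc (p * p ^ k)) e ^ 2) (𝓝[>] 0) (𝓝 K) := by
    have := (((FP_deriv (cc_summable p hp)).continuousAt.tendsto.pow 2).const_mul K)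
    rw [FP_zero, one_pow, mul_one] at this
    exact this.mono_left nhdsWithin_le_nhds
  have l3 := l1.congr' (f₂ := fun e : ℝ => K * FP (fun k => cc (p * p ^ k)) e ^ 2) (by
    filter_upwards [self_mem_nhdsWithin] with e he
    have he' : (0 : ℝ) < e := he
    rw [key e he', inv_mul_cancel_left₀ he'.ne'])
  have := tendsto_nhds_unique l3 l2
  linarith

noncomputable def lam (q : ℝ) : ℝ := ∑' k : ℕ, cc (q * q ^ k)

lemma cc_neg {u : ℝ} (h : |u| < 1) : cc (-u) = 4 * cc (u ^ 2) - cc u := by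
  obtain ⟨h1, h2⟩ := abs_lt.1 h
  have a : 1 - u ≠ 0 := by linarith
  have b : 1 + u ≠ 0 := by linarith
  unfold cc
  rw [show 1 - u ^ 2 = (1 - u) * (1 + u) by ring, sub_neg_eq_add]
  field_simp
  ring

lemma tsum_cc_neg {x p : ℝ} (hx : |x| < 1) (hp : |p| < 1) :
    ∑' k : ℕ, cc (-x * p ^ k) = 4 * ∑' k : ℕ, cc (x ^ 2 * (p ^ 2) ^ k) - ∑' k : ℕ, cc (x * p ^ k) := by
  have h2 := cc_summable (x ^ 2) (abs_pow_lt hp two_ne_zero)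
  rw [← tsum_mul_left, ← (h2.mul_left 4).tsum_sub (cc_summable x hp)]
  refine tsum_congr fun k => ?_
  rw [neg_mul, cc_neg (abs_mul_pow_lt hx hp k)]
  congr 3
  rw [mul_pow, ← pow_mul, ← pow_mul, mul_comm 2]

lemma lam_split {q : ℝ} (hq : |q| < 1) : ∑' k : ℕ, cc (q * (q ^ 3) ^ k) +
    ∑' k : ℕ, cc (q ^ 2 * (q ^ 3) ^ k) = lam q - lam (q ^ 3) := by
  have h := Nat.sumByResidueClasses (cc_summable q hq) 3
  unfold lam
  rw [h]
  rw [show (Finset.univ : Finset (ZMod 3)) = {0, 1, 2} from rfl]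
  rw [Finset.sum_insert (by decide), Finset.sum_insert (by decide), Finset.sum_singleton]
  rw [show (0 : ZMod 3).val = 0 from rfl, show (1 : ZMod 3).val = 1 from rfl,
    show (2 : ZMod 3).val = 2 from rfl]
  have e0 : ∀ k : ℕ, q * q ^ (0 + 3 * k) = q * (q ^ 3) ^ k := fun k => by rw [← pow_mul]; ring
  have e1 : ∀ k : ℕ, q * q ^ (1 + 3 * k) = q ^ 2 * (q ^ 3) ^ k := fun k => by rw [← pow_mul]; ring
  have e2 : ∀ k : ℕ, q * q ^ (2 + 3 * k) = q ^ 3 * (q ^ 3) ^ k := fun k => by rw [← pow_mul]; ring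
  simp only [e0, e1, e2]
  ring

lemma LL_q {q : ℝ} (hq : |q| < 1) (h0 : q ≠ 0) : LL (q ^ 3) q = lam q - lam (q ^ 3) := by
  rw [← lam_split hq, LL, show q ^ 3 / q = q ^ 2 by field_simp]

lemma LL_neg_q {q : ℝ} (hq : |q| < 1) (h0 : q ≠ 0) :
    LL (q ^ 3) (-q) = 4 * (lam (q ^ 2) - lam (q ^ 6)) - (lam q - lam (q ^ 3)) := by
  have hp := abs_pow_lt hq (n := 3) (by norm_num)
  have h2 := abs_pow_lt hq (n := 2) (by norm_num)
  have := lam_split h2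
  rw [← lam_split hq, LL, show q ^ 3 / -q = -q ^ 2 by field_simp, tsum_cc_neg hq hp,
    tsum_cc_neg h2 hp]
  simp only [← pow_mul] at this ⊢
  norm_num at this ⊢
  linear_combination 4 * this

lemma LL_neg_one {q : ℝ} (hq : |q| < 1) :
    LL (q ^ 3) (-1) = -1 / 4 + 2 * (4 * lam (q ^ 6) - lam (q ^ 3)) := by
  have hp := abs_pow_lt hq (n := 3) (by norm_num)
  have e := tsum_cc_neg hp hp
  have h1 : ∑' k : ℕ, cc (-1 * (q ^ 3) ^ k) = -1 / 4 + ∑' k : ℕ, cc (-q ^ 3 * (q ^ 3) ^ k) := by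
    rw [(cc_summable (-1) hp).tsum_eq_zero_add]
    congr 1
    · norm_num [cc]
    · refine tsum_congr fun k => ?_
      congr 1; ring
  rw [LL, show q ^ 3 / -1 = -q ^ 3 by ring, h1, e]
  unfold lam
  rw [show (q ^ 3) ^ 2 = q ^ 6 by ring]
  ring

lemma AG {q : ℝ} (hq : |q| < 1) (h0 : q ≠ 0) :
    EE (q ^ 2) ^ 2 * EE (q ^ 3) ^ 12 / (EE q ^ 4 * EE (q ^ 6) ^ 6) +
      q * EE (q ^ 3) ^ 3 * EE (q ^ 6) ^ 3 / (EE q * EE (q ^ 2)) =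
    1 + 5 * lam q - 2 * lam (q ^ 2) + 3 * lam (q ^ 3) - 30 * lam (q ^ 6) := by
  have hp := abs_pow_lt hq (n := 3) (by norm_num)
  have hp0 : q ^ 3 ≠ 0 := pow_ne_zero _ h0
  have hn : -q ≠ 0 := neg_ne_zero.2 h0
  have hm1 : (-1 : ℝ) ≠ 0 := by norm_num
  have p1 := (EE_pos hq).ne'
  have p2 := (EE_pos (abs_pow_lt hq (n := 2) (by norm_num))).ne'
  have p3 := (EE_pos (abs_pow_lt hq (n := 3) (by norm_num))).ne'
  have p6 := (EE_pos (abs_pow_lt hq (n := 6) (by norm_num))).ne'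
  have ta := TH_q hq h0
  have tb := TH_neg_q hq h0
  have tc := TH_neg_one hp
  rw [← pow_mul] at tc
  norm_num at tc
  have na : TH (q ^ 3) q ≠ 0 := by rw [ta]; exact p1
  have nb : TH (q ^ 3) (-q) ≠ 0 := by rw [tb]; positivity
  have nc : TH (q ^ 3) (-1) ≠ 0 := by rw [tc]; positivity
  have l1 := lambert hp hp0 hm1 h0 nc na
  have l2 := lambert hp hp0 hn h0 nb na
  have r := TH_refl (p := q ^ 3) hn hp0
  rw [show q ^ 3 / -q = -q * q by field_simp] at r
  have ib := TH_inv hn hp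
  rw [show (-1 : ℝ) * q = -q by ring, show (-1 : ℝ) / q = 1 / -q by field_simp] at l1
  rw [r, show -q / q = -1 by field_simp] at l2
  have ib' : TH (q ^ 3) (1 / -q) = TH (q ^ 3) (-q) / q := by
    field_simp at ib ⊢
    linear_combination -ib
  rw [ib', LL_q hq h0, LL_neg_one hq, ta, tb, tc] at l1
  rw [LL_q hq h0, LL_neg_q hq h0, ta, tb, tc] at l2
  have f1 : EE (q ^ 2) ^ 2 * EE (q ^ 3) ^ 12 / (EE q ^ 4 * EE (q ^ 6) ^ 6) =
    4 * (lam q - lam (q ^ 3) - (-1 / 4 + 2 * (4 * lam (q ^ 6) - lam (q ^ 3)))) := by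
    rw [l1]; field_simp; norm_num
  have f2 : q * EE (q ^ 3) ^ 3 * EE (q ^ 6) ^ 3 / (EE q * EE (q ^ 2)) =
    (1 / 2) * (lam q - lam (q ^ 3) - (4 * (lam (q ^ 2) - lam (q ^ 6)) - (lam q - lam (q ^ 3)))) := by
    rw [l2]; field_simp
  rw [f1, f2]; ring

noncomputable def qq (t : ℝ) : ℝ := exp (-2 * π * t)
noncomputable def ee (t : ℝ) : ℝ := exp (-2 * π * t / 24) * EE (qq t)

lemma qq_pos (t : ℝ) : 0 < qq t := exp_pos _
lemma qq_abs {t : ℝ} (ht : 0 < t) : |qq t| < 1 := by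
  rw [abs_of_pos (qq_pos t), qq, exp_lt_one_iff]
  have := mul_pos (mul_pos two_pos pi_pos) ht
  linarith
lemma qq_pow (t : ℝ) (n : ℕ) : qq t ^ n = qq (n * t) := by
  rw [qq, qq, ← exp_nat_mul]; congr 1; ring
lemma ee_pos {t : ℝ} (ht : 0 < t) : 0 < ee t := mul_pos (exp_pos _) (EE_pos (qq_abs ht))

lemma eta_I (t : ℝ) (ht : 0 < t) : ModularForm.eta (Complex.I * t) = (ee t : ℂ) := by
  unfold ModularForm.eta ee EE
  have hm : Multipliable fun k : ℕ => 1 - qq t ^ (k + 1) := (EE_hasProd (qq_abs ht)).multipliable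
  rw [Complex.ofReal_mul]
  have h1 : Function.Periodic.qParam 24 (Complex.I * t) = ((exp (-2 * π * t / 24) : ℝ) : ℂ) := by
    unfold Function.Periodic.qParam
    push_cast
    congr 1
    linear_combination (2 * (π : ℂ) * t / 24) * Complex.I_sq
  have h2 : ((∏' k : ℕ, (1 - qq t ^ (k + 1)) : ℝ) : ℂ) =
      ∏' k : ℕ, ((1 - qq t ^ (k + 1) : ℝ) : ℂ) :=
    (hm.map_tprod Complex.ofRealHom Complex.continuous_ofReal)
  rw [h1, h2]
  congr 1
  refine tprod_congr fun n => ?_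
  rw [ModularForm.eta_q_eq_pow]
  push_cast
  congr 2
  unfold qq
  push_cast
  congr 1
  linear_combination (2 * (π : ℂ) * t) * Complex.I_sq

lemma sqrt_norm (z : ℂ) : ‖Complex.sqrt z‖ ^ 2 = ‖z‖ := by
  rw [← norm_pow]
  congr 1
  have := Complex.cpow_nat_inv_pow z (n := 2) two_ne_zero
  simpa [Complex.sqrt] using this

lemma ee_inv {t : ℝ} (ht : 0 < t) : ee (1 / t) = √t * ee t := by
  have h := ModularForm.eta_comp_eq_csqrt_I_inv (x := Complex.I * t) (by
    simp [UpperHalfPlane.upperHalfPlaneSet, ht])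
  simp only [Function.comp_apply, Pi.smul_apply, Pi.mul_apply, smul_eq_mul] at h
  have e : (-1 : ℂ) / (Complex.I * t) = Complex.I * ((1 / t : ℝ) : ℂ) := by
    have : (t : ℂ) ≠ 0 := by exact_mod_cast ht.ne'
    have hI := Complex.I_ne_zero
    push_cast
    field_simp
    linear_combination -Complex.I_sq
  rw [e, eta_I _ (by positivity), eta_I _ ht] at h
  have h2 := congrArg (fun z : ℂ => ‖z‖ ^ 2) h
  simp only [norm_mul, norm_inv, mul_pow, inv_pow, sqrt_norm, Complex.norm_I, Complex.norm_real,
    Real.norm_eq_abs, sq_abs, inv_one, one_mul] at h2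
  rw [abs_of_pos ht] at h2
  have p1 := ee_pos ht
  have p2 := ee_pos (t := 1 / t) (by positivity)
  refine (pow_left_inj₀ p2.le (by positivity) two_ne_zero).1 ?_
  rw [h2, mul_pow, Real.sq_sqrt ht.le]

lemma EE_ee (t : ℝ) (n : ℕ) : EE (qq t ^ n) = exp (2 * π * t / 24) ^ n * ee (n * t) := by
  rw [qq_pow, ee, ← mul_assoc, ← exp_nat_mul, ← exp_add]
  rw [show (n : ℝ) * (2 * π * t / 24) + -2 * π * (n * t) / 24 = 0 by ring, exp_zero, one_mul]

lemma V1_ee {s : ℝ} (hs : 0 < s) :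
    V1 (qq s) = ee (2 * s) * ee (6 * s) ^ 5 / (ee s ^ 5 * ee (3 * s)) := by
  have h1 := EE_ee s 1
  have p1 := (ee_pos hs).ne'
  have p3 := (ee_pos (t := 3 * s) (by positivity)).ne'
  rw [pow_one, pow_one, Nat.cast_one, one_mul] at h1
  have hq : qq s * exp (2 * π * s / 24) ^ 24 = 1 := by
    rw [qq, ← exp_nat_mul, ← exp_add]
    rw [show -2 * π * s + (24 : ℕ) * (2 * π * s / 24) = 0 by push_cast; ring, exp_zero]
  rw [V1_eq (qq_abs hs), h1, EE_ee, EE_ee, EE_ee]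
  push_cast
  have hx := (exp_pos (2 * π * s / 24)).ne'
  generalize ee (6 * s) = x6 at *
  generalize ee (3 * s) = x3 at *
  generalize ee (2 * s) = x2 at *
  generalize ee s = x1 at *
  field_simp
  linear_combination (x2 * x6 ^ 5) * hq

lemma one_add_V_ee {s : ℝ} (hs : 0 < s) :
    1 + 8 * V1 (qq s) = ee (2 * s) ^ 4 * ee (3 * s) ^ 8 / (ee s ^ 8 * ee (6 * s) ^ 4) := by
  have h1 := EE_ee s 1
  have p1 := (ee_pos hs).ne'
  have p6 := (ee_pos (t := 6 * s) (by positivity)).ne'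
  rw [pow_one, pow_one, Nat.cast_one, one_mul] at h1
  rw [one_add_V (qq_abs hs) (qq_pos s).ne', h1, EE_ee, EE_ee, EE_ee]
  push_cast
  have hx := (exp_pos (2 * π * s / 24)).ne'
  generalize ee (6 * s) = x6 at *
  generalize ee (3 * s) = x3 at *
  generalize ee (2 * s) = x2 at *
  generalize ee s = x1 at *
  field_simp

lemma fricke_ee {s : ℝ} (hs : 0 < s) :
    ee (1 / (6 * s)) = √2 * √3 * √s * ee (6 * s) ∧
    ee (2 * (1 / (6 * s))) = √3 * √s * ee (3 * s) ∧
    ee (3 * (1 / (6 * s))) = √2 * √s * ee (2 * s) ∧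
    ee (6 * (1 / (6 * s))) = √s * ee s := by
  refine ⟨?_, ?_, ?_, ?_⟩
  · rw [ee_inv (by positivity), Real.sqrt_mul (by norm_num), show √(6 : ℝ) = √2 * √3 by
      rw [← Real.sqrt_mul (by norm_num)]; norm_num]
  · rw [show 2 * (1 / (6 * s)) = 1 / (3 * s) by field_simp; norm_num,
      ee_inv (by positivity), Real.sqrt_mul (by norm_num)]
  · rw [show 3 * (1 / (6 * s)) = 1 / (2 * s) by field_simp; norm_num,
      ee_inv (by positivity), Real.sqrt_mul (by norm_num)]
  · rw [show 6 * (1 / (6 * s)) = 1 / s by field_simp, ee_inv hs]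

lemma fricke {s : ℝ} (hs : 0 < s) : V1 (qq s) * V1 (qq (1 / (6 * s))) = 1 / 72 := by
  obtain ⟨a, b, c, d⟩ := fricke_ee hs
  rw [V1_ee hs, V1_ee (by positivity), a, b, c, d]
  have p1 := (ee_pos hs).ne'
  have p2 := (ee_pos (t := 2 * s) (by positivity)).ne'
  have p3 := (ee_pos (t := 3 * s) (by positivity)).ne'
  have p6 := (ee_pos (t := 6 * s) (by positivity)).ne'
  have hs' : √s ≠ 0 := by positivity
  have h2 : √2 ^ 2 = (2 : ℝ) := Real.sq_sqrt (by norm_num)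
  have h3 : √3 ^ 2 = (3 : ℝ) := Real.sq_sqrt (by norm_num)
  generalize ee (6 * s) = x6 at *
  generalize ee (3 * s) = x3 at *
  generalize ee (2 * s) = x2 at *
  generalize ee s = x1 at *
  field_simp
  rw [show √2 ^ 6 = (√2 ^ 2) ^ 3 by ring, show √3 ^ 4 = (√3 ^ 2) ^ 2 by ring, h2, h3]
  norm_num

lemma one_add_nine_V_ee {s : ℝ} (hs : 0 < s) :
    1 + 9 * V1 (qq s) = ee (2 * s) ^ 9 * ee (3 * s) ^ 3 / (ee s ^ 9 * ee (6 * s) ^ 3) := by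
  obtain ⟨a, b, c, d⟩ := fricke_ee hs
  have p1 := (ee_pos hs).ne'
  have p2 := (ee_pos (t := 2 * s) (by positivity)).ne'
  have p3 := (ee_pos (t := 3 * s) (by positivity)).ne'
  have p6 := (ee_pos (t := 6 * s) (by positivity)).ne'
  have hs' : √s ≠ 0 := by positivity
  have h2 : √2 ^ 2 = (2 : ℝ) := Real.sq_sqrt (by norm_num)
  have h3 : √3 ^ 2 = (3 : ℝ) := Real.sq_sqrt (by norm_num)
  have hV := V1_ee hs
  have hV0 : V1 (qq s) ≠ 0 := by rw [hV]; positivity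
  have f := fricke hs
  have h := one_add_V_ee (s := 1 / (6 * s)) (by positivity)
  rw [a, b, c, d] at h
  have e : 1 + 9 * V1 (qq s) = 9 * V1 (qq s) * (1 + 8 * V1 (qq (1 / (6 * s)))) := by
    linear_combination -72 * f
  rw [e, h, hV]
  clear e h hV0 hV a b c d f
  generalize ee (6 * s) = x6 at *
  generalize ee (3 * s) = x3 at *
  generalize ee (2 * s) = x2 at *
  generalize ee s = x1 at *
  field_simp
  rw [show √3 ^ 4 = (√3 ^ 2) ^ 2 by ring, h3]
  norm_num

lemma exists_qq {q : ℝ} (h0 : 0 < q) (h1 : q < 1) : ∃ s, 0 < s ∧ q = qq s := by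
  refine ⟨-log q / (2 * π), div_pos (by linarith [log_neg h0 h1]) (by positivity), ?_⟩
  have := pi_pos
  rw [qq, show -2 * π * (-log q / (2 * π)) = log q by field_simp, exp_log h0]

lemma one_add_nine_V {q : ℝ} (h0 : 0 < q) (h1 : q < 1) :
    1 + 9 * V1 q = EE (q ^ 2) ^ 9 * EE (q ^ 3) ^ 3 / (EE q ^ 9 * EE (q ^ 6) ^ 3) := by
  obtain ⟨s, hs, rfl⟩ := exists_qq h0 h1
  have h1 := EE_ee s 1
  have p1 := (ee_pos hs).ne'
  have p6 := (ee_pos (t := 6 * s) (by positivity)).ne'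
  rw [pow_one, pow_one, Nat.cast_one, one_mul] at h1
  rw [one_add_nine_V_ee hs, h1, EE_ee, EE_ee, EE_ee]
  push_cast
  have hx := (exp_pos (2 * π * s / 24)).ne'
  generalize ee (6 * s) = x6 at *
  generalize ee (3 * s) = x3 at *
  generalize ee (2 * s) = x2 at *
  generalize ee s = x1 at *
  field_simp

lemma lam_swap {q : ℝ} (h0 : 0 < q) (h1 : q < 1) :
    HasSum (fun n : ℕ => (n + 1) * (q ^ (n + 1) / (1 - q ^ (n + 1)))) (lam q) := by
  have hq : |q| < 1 := by rwa [abs_of_pos h0]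
  have hpow : ∀ n : ℕ, |q ^ (n + 1)| < 1 := fun n => abs_pow_lt hq (Nat.succ_ne_zero n)
  let f : ℕ × ℕ → ℝ := fun x => (x.2 + 1) * q ^ ((x.1 + 1) * (x.2 + 1))
  have row : ∀ m : ℕ, HasSum (fun n : ℕ => f (m, n)) (cc (q * q ^ m)) := by
    intro m
    have := hasSum_coe_mul_geometric_of_norm_lt_one (r := q ^ (m + 1)) (hpow m)
    have h2 := (hasSum_nat_add_iff' 1).2 this
    simp only [Finset.range_one, Finset.sum_singleton, Nat.cast_zero, zero_mul, sub_zero] at h2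
    have e : cc (q * q ^ m) = q ^ (m + 1) / (1 - q ^ (m + 1)) ^ 2 := by
      unfold cc; rw [← pow_succ']
    rw [e]
    refine hs_congr h2 fun n => ?_
    simp only [f]
    push_cast
    rw [pow_mul]
  have col : ∀ n : ℕ, HasSum (fun m : ℕ => f (m, n)) ((n + 1) * (q ^ (n + 1) / (1 - q ^ (n + 1)))) := by
    intro n
    have := (hasSum_geometric_of_abs_lt_one (hpow n)).mul_left ((n + 1) * q ^ (n + 1))
    have e : ((n : ℝ) + 1) * (q ^ (n + 1) / (1 - q ^ (n + 1))) =
        (n + 1) * q ^ (n + 1) * (1 - q ^ (n + 1))⁻¹ := by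
      rw [div_eq_mul_inv]; ring
    rw [e]
    refine hs_congr this fun m => ?_
    simp only [f]
    rw [mul_comm (m + 1), pow_mul]; ring
  have hs : Summable f := by
    refine (summable_prod_of_nonneg fun x => ?_).2 ⟨fun m => (row m).summable, ?_⟩
    · simp only [f, Pi.zero_apply]; positivity
    · simp only [(row _).tsum_eq]
      exact cc_summable q hq
  have t1 : HasSum f (lam q) := by
    have := hs.hasSum.prod_fiberwise row
    unfold lam
    rw [this.tsum_eq]
    exact hs.hasSum
  have t2 : HasSum (f ∘ Prod.swap) (lam q) := (Equiv.prodComm ℕ ℕ).hasSum_iff.2 t1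
  exact t2.prod_fiberwise col

lemma EE_ofReal {x : ℝ} (hx : |x| < 1) :
    ∏' n : ℕ, (1 - (x : ℂ) ^ (n + 1)) = (EE x : ℂ) := by
  have h2 : ((∏' k : ℕ, (1 - x ^ (k + 1)) : ℝ) : ℂ) =
      ∏' k : ℕ, ((1 - x ^ (k + 1) : ℝ) : ℂ) :=
    ((EE_hasProd hx).multipliable.map_tprod Complex.ofRealHom Complex.continuous_ofReal)
  rw [EE, h2]
  push_cast
  rfl

lemma EE_hasDeriv {q : ℝ} (h0 : 0 < q) (h1 : q < 1) :
    HasDerivAt EE (-(EE q * lam q / q)) q := by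
  have hq : |q| < 1 := by rwa [abs_of_pos h0]
  have hmem : (q : ℂ) ∈ Metric.ball (0 : ℂ) 1 := by simpa using hq
  have hqc : (q : ℂ) ≠ 0 := by exact_mod_cast h0.ne'
  have hE := (EE_pos hq).ne'
  let F : ℂ → ℂ := fun z => ∏' n : ℕ, (1 - z ^ (n + 1))
  have hFq : F q = (EE q : ℂ) := EE_ofReal hq
  have hd : DifferentiableAt ℂ F q :=
    (ModularForm.differentiableOn_tprod_one_sub_pow q hmem).differentiableAt
      (Metric.isOpen_ball.mem_nhds hmem)
  have hne : ∀ n : ℕ, (1 : ℝ) - q ^ (n + 1) ≠ 0 := fun n => by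
    have := (abs_lt.1 (abs_pow_lt hq (Nat.succ_ne_zero n))).2
    simp only [Nat.succ_eq_add_one] at this
    linarith
  have hlog : ∀ n : ℕ, logDeriv (fun z : ℂ => 1 - z ^ (n + 1)) q =
      ((-(1 / q) * ((n + 1) * (q ^ (n + 1) / (1 - q ^ (n + 1)))) : ℝ) : ℂ) := by
    intro n
    have hne' : (1 : ℂ) - q ^ (n + 1) ≠ 0 := by exact_mod_cast hne n
    rw [logDeriv_apply]
    have : HasDerivAt (fun z : ℂ => 1 - z ^ (n + 1)) (-(((n + 1 : ℕ) : ℂ) * q ^ n)) (q : ℂ) := by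
      simpa using (hasDerivAt_pow (n + 1) (q : ℂ)).const_sub 1
    rw [this.deriv]
    push_cast
    field_simp
    ring
  have hsum := ((lam_swap h0 h1).mul_left (-(1 / q)))
  have hsumC : HasSum (fun n : ℕ => logDeriv (fun z : ℂ => 1 - z ^ (n + 1)) (q : ℂ))
      ((-(1 / q) * lam q : ℝ) : ℂ) := by
    simp only [hlog]
    exact Complex.hasSum_ofReal.2 hsum
  have hl : logDeriv F q = ((-(1 / q) * lam q : ℝ) : ℂ) := by
    rw [← hsumC.tsum_eq]
    refine logDeriv_tprod_eq_tsum Metric.isOpen_ball hmem (fun n => ?_) (fun n => by fun_prop)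
      hsumC.summable ModularForm.multipliableLocallyUniformlyOn_one_sub_pow ?_
    · exact_mod_cast hne n
    · change F q ≠ 0
      rw [hFq]; exact_mod_cast hE
  have hder : deriv F q = ((-(EE q * lam q / q) : ℝ) : ℂ) := by
    have : deriv F q = logDeriv F q * F q := by
      rw [logDeriv_apply, div_mul_cancel₀]
      rw [hFq]; exact_mod_cast hE
    rw [this, hl, hFq, ← Complex.ofReal_mul]
    congr 1
    ring
  have h := hd.hasDerivAt.real_of_complex
  rw [hder, Complex.ofReal_re] at h
  refine h.congr_of_eventuallyEq ?_
  have : ∀ᶠ x : ℝ in 𝓝 q, |x| < 1 := (continuous_abs.tendsto q).eventually (gt_mem_nhds hq)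
  filter_upwards [this] with x hx
  simp only [F]
  rw [EE_ofReal hx, Complex.ofReal_re]

lemma EE_continuousAt {q : ℝ} (hq : |q| < 1) : ContinuousAt EE q := by
  have hmem : (q : ℂ) ∈ Metric.ball (0 : ℂ) 1 := by simpa using hq
  have hd := ((ModularForm.differentiableOn_tprod_one_sub_pow q hmem).differentiableAt
      (Metric.isOpen_ball.mem_nhds hmem)).hasDerivAt.real_of_complex
  refine hd.continuousAt.congr ?_
  have : ∀ᶠ x : ℝ in 𝓝 q, |x| < 1 := (continuous_abs.tendsto q).eventually (gt_mem_nhds hq)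
  filter_upwards [this] with x hx
  rw [EE_ofReal hx, Complex.ofReal_re]

lemma EE_pow_hasDeriv {q : ℝ} (h0 : 0 < q) (h1 : q < 1) (n : ℕ) (hn : n ≠ 0) :
    HasDerivAt (fun x => EE (x ^ n)) (-(n * EE (q ^ n) * lam (q ^ n) / q)) q := by
  have hp : 0 < q ^ n := by positivity
  have := (EE_hasDeriv hp (pow_lt_one₀ h0.le h1 hn)).comp q (hasDerivAt_pow n q)
  refine this.congr_deriv ?_
  obtain ⟨m, rfl⟩ := Nat.exists_eq_succ_of_ne_zero hn
  simp only [Nat.succ_eq_add_one, Nat.add_sub_cancel]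
  rw [pow_succ q m]
  have := h0.ne'
  field_simp

lemma V1_hasDeriv {q : ℝ} (h0 : 0 < q) (h1 : q < 1) : HasDerivAt V1 (U1 q) q := by
  have hq : |q| < 1 := by rwa [abs_of_pos h0]
  have hq0 := h0.ne'
  have p1 := (EE_pos hq).ne'
  have p2 := (EE_pos (abs_pow_lt hq (n := 2) (by norm_num))).ne'
  have p3 := (EE_pos (abs_pow_lt hq (n := 3) (by norm_num))).ne'
  have p6 := (EE_pos (abs_pow_lt hq (n := 6) (by norm_num))).ne'
  have d1 := EE_hasDeriv h0 h1
  have d2 := EE_pow_hasDeriv h0 h1 2 (by norm_num)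
  have d3 := EE_pow_hasDeriv h0 h1 3 (by norm_num)
  have d6 := EE_pow_hasDeriv h0 h1 6 (by norm_num)
  have D := (hasDerivAt_id q).mul ((d2.mul (d6.pow 5)).div ((d1.pow 5).mul d3)
    (mul_ne_zero (pow_ne_zero 5 p1) p3))
  have hev : V1 =ᶠ[𝓝 q] (id * ((fun x => EE (x ^ 2)) * (fun x => EE (x ^ 6)) ^ 5 /
      (EE ^ 5 * fun x => EE (x ^ 3)))) := by
    have : ∀ᶠ x : ℝ in 𝓝 q, |x| < 1 := (continuous_abs.tendsto q).eventually (gt_mem_nhds hq)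
    filter_upwards [this] with x hx
    exact V1_eq hx
  refine (D.congr_of_eventuallyEq hev).congr_deriv ?_
  have ag := AG hq hq0
  have b8 := one_add_V hq hq0
  have b9 := one_add_nine_V h0 h1
  rw [V1_eq hq] at b8 b9
  rw [U1_eq hq]
  simp only [Pi.mul_apply, Pi.pow_apply, Pi.div_apply, id, Nat.cast_ofNat]
  generalize lam q = l1 at *
  generalize lam (q ^ 2) = l2 at *
  generalize lam (q ^ 3) = l3 at *
  generalize lam (q ^ 6) = l6 at *
  clear D hev d1 d2 d3 d6
  generalize EE q = e1 at *
  generalize EE (q ^ 2) = e2 at *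
  generalize EE (q ^ 3) = e3 at *
  generalize EE (q ^ 6) = e6 at *
  have key : e2 ^ 7 * e3 ^ 7 / (e1 ^ 5 * e6 ^ 5) = 1 + 5 * l1 - 2 * l2 + 3 * l3 - 30 * l6 := by
    rw [← ag]
    have hb : e2 ^ 9 * e3 ^ 3 / (e1 ^ 9 * e6 ^ 3) ≠ 0 := by positivity
    have h1 : (e2 ^ 2 * e3 ^ 12 / (e1 ^ 4 * e6 ^ 6)) * (e2 ^ 9 * e3 ^ 3 / (e1 ^ 9 * e6 ^ 3)) =
        (e2 ^ 7 * e3 ^ 7 / (e1 ^ 5 * e6 ^ 5)) * (e2 ^ 4 * e3 ^ 8 / (e1 ^ 8 * e6 ^ 4)) := by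
      field_simp
    have h2 : (q * e3 ^ 3 * e6 ^ 3 / (e1 * e2)) * (e2 ^ 9 * e3 ^ 3 / (e1 ^ 9 * e6 ^ 3)) =
        (e2 ^ 7 * e3 ^ 7 / (e1 ^ 5 * e6 ^ 5)) * (q * (e2 * e6 ^ 5 / (e1 ^ 5 * e3))) := by
      field_simp
    apply mul_right_cancel₀ hb
    rw [add_mul, h1, h2, ← b8, ← b9]
    ring
  have e : e2 ^ 8 * e3 ^ 6 / e1 ^ 10 = (e2 * e6 ^ 5 / (e1 ^ 5 * e3)) *
      (e2 ^ 7 * e3 ^ 7 / (e1 ^ 5 * e6 ^ 5)) := by field_simp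
  rw [e, key]
  field_simp
  ring

lemma EE_pow_cont {q : ℝ} (hq : |q| < 1) (n : ℕ) (hn : n ≠ 0) :
    ContinuousAt (fun x => EE (x ^ n)) q :=
  ContinuousAt.comp (f := fun x : ℝ => x ^ n) (g := EE) (EE_continuousAt (abs_pow_lt hq hn))
    (continuous_pow n).continuousAt

lemma V1_cont {q : ℝ} (hq : |q| < 1) : ContinuousAt V1 q := by
  have p1 := (EE_pos hq).ne'
  have p3 := (EE_pos (abs_pow_lt hq (n := 3) (by norm_num))).ne'
  have hev : (fun t => t * (EE (t ^ 2) * EE (t ^ 6) ^ 5 / (EE t ^ 5 * EE (t ^ 3)))) =ᶠ[𝓝 q] V1 := by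
    have : ∀ᶠ x : ℝ in 𝓝 q, |x| < 1 := (continuous_abs.tendsto q).eventually (gt_mem_nhds hq)
    filter_upwards [this] with x hx
    exact (V1_eq hx).symm
  refine ContinuousAt.congr ?_ hev
  exact continuousAt_id.mul (((EE_pow_cont hq 2 (by norm_num)).mul
    ((EE_pow_cont hq 6 (by norm_num)).pow 5)).div (((EE_continuousAt hq).pow 5).mul
    (EE_pow_cont hq 3 (by norm_num))) (mul_ne_zero (pow_ne_zero 5 p1) p3))

lemma U1_cont {q : ℝ} (hq : |q| < 1) : ContinuousAt U1 q := by
  have p1 := (EE_pos hq).ne'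
  have hev : (fun t => EE (t ^ 2) ^ 8 * EE (t ^ 3) ^ 6 / EE t ^ 10) =ᶠ[𝓝 q] U1 := by
    have : ∀ᶠ x : ℝ in 𝓝 q, |x| < 1 := (continuous_abs.tendsto q).eventually (gt_mem_nhds hq)
    filter_upwards [this] with x hx
    exact (U1_eq hx).symm
  refine ContinuousAt.congr ?_ hev
  exact (((EE_pow_cont hq 2 (by norm_num)).pow 8).mul
    ((EE_pow_cont hq 3 (by norm_num)).pow 6)).div ((EE_continuousAt hq).pow 10)
    (pow_ne_zero 10 p1)

lemma integral_U1 {q : ℝ} (h0 : 0 < q) (h1 : q < 1) : (∫ t in (0:ℝ)..q, U1 t) = V1 q := by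
  have hab : ∀ x ∈ Set.Icc 0 q, |x| < 1 := fun x hx => by
    rw [abs_of_nonneg hx.1]; exact lt_of_le_of_lt hx.2 h1
  have := intervalIntegral.integral_eq_sub_of_hasDerivAt_of_le (f := V1) (f' := U1) h0.le
    (fun x hx => (V1_cont (hab x hx)).continuousWithinAt)
    (fun x hx => V1_hasDeriv hx.1 (hx.2.trans h1))
    (ContinuousOn.intervalIntegrable_of_Icc h0.le
      (fun x hx => (U1_cont (hab x hx)).continuousWithinAt))
  rw [this, V1_eq (t := 0) (by simp)]
  ring

lemma V1_pos {q : ℝ} (h0 : 0 < q) (h1 : q < 1) : 0 < V1 q := by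
  have hq : |q| < 1 := by rwa [abs_of_pos h0]
  have p1 := (EE_pos hq)
  have p2 := (EE_pos (abs_pow_lt hq (n := 2) (by norm_num)))
  have p3 := (EE_pos (abs_pow_lt hq (n := 3) (by norm_num)))
  have p6 := (EE_pos (abs_pow_lt hq (n := 6) (by norm_num)))
  rw [V1_eq hq]
  positivity

lemma qq_lt_one {t : ℝ} (ht : 0 < t) : qq t < 1 := lt_of_abs_lt (qq_abs ht)

lemma val6 : V1 (exp (-2 * π / √6)) = √2 / 12 := by
  have s6 : 0 < √(6:ℝ) := by positivity
  have e6 : √(6:ℝ) ^ 2 = 6 := Real.sq_sqrt (by norm_num)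
  have e2 : √(2:ℝ) ^ 2 = 2 := Real.sq_sqrt (by norm_num)
  have e : exp (-2 * π / √6) = qq (1 / √6) := by unfold qq; congr 1; ring
  have hs : 0 < 1 / √(6:ℝ) := by positivity
  have f := fricke hs
  have e' : 1 / (6 * (1 / √(6:ℝ))) = 1 / √6 := by
    field_simp; linarith
  rw [e'] at f
  rw [e]
  have hp := V1_pos (qq_pos _) (qq_lt_one hs)
  have : V1 (qq (1 / √6)) ^ 2 = (√2 / 12) ^ 2 := by rw [div_pow, e2]; linarith
  exact (pow_left_inj₀ hp.le (by positivity) (by norm_num)).1 this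

lemma E_neg_odd {q : ℝ} (hq : |q| < 1) :
    EE ((-q) ^ 3) * EE (q ^ 3) * EE (q ^ 12) = EE (q ^ 6) ^ 3 := by
  have := EE_neg (abs_pow_lt hq (n := 3) (by norm_num))
  rw [← pow_mul, ← pow_mul] at this
  rw [show (-q) ^ 3 = -(q ^ 3) by ring]
  exact this

lemma alg3 {s t : ℝ} (hs : 1 < s) (ht : 0 < t) (h1 : (s ^ 2 - 1) * (t ^ 2 - 1) = -8 * (s * t) * (s * t - 1))
    (h2 : (s ^ 2 - 1) * (s * t - 1) = 64 / 72) : (s * t - 1) / 8 = (√3 - 1) / 24 := by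
  have e3 : √(3:ℝ) ^ 2 = 3 := Real.sq_sqrt (by norm_num)
  have p3 : 0 < √(3:ℝ) := by positivity
  have h3 : (3 * (s * t) - 1) ^ 2 = (s + t) ^ 2 := by nlinarith
  have hst : 1 < s * t := by
    have : 0 < s ^ 2 - 1 := by nlinarith
    by_contra h
    push Not at h
    nlinarith
  have h4 : 3 * (s * t) - 1 = s + t :=
    (pow_left_inj₀ (by linarith) (by linarith) (by norm_num)).1 h3
  obtain ⟨d, rfl⟩ : ∃ d, s = 1 + d := ⟨s - 1, by ring⟩
  have hd : 0 < d := by linarith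
  have h5 : t * (3 * d + 2) = d + 2 := by linarith
  have h6 : ((1 + d) * t - 1) * (3 * d + 2) = d ^ 2 := by linear_combination (1 + d) * h5
  have h7 : 9 * (d ^ 2 + 2 * d) * d ^ 2 = 8 * (3 * d + 2) := by
    linear_combination 9 * (3 * d + 2) * h2 - 9 * (d ^ 2 + 2 * d) * h6
  have h8 : (3 * d ^ 2 - 4) * (3 * d ^ 2 + 6 * d + 4) = 0 := by linear_combination h7
  have h9 : 3 * d ^ 2 - 4 = 0 := by
    rcases mul_eq_zero.1 h8 with h | h
    · exact h
    · nlinarith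
  have h10 : d * √3 = 2 := by
    have : (d * √3) ^ 2 = 2 ^ 2 := by rw [mul_pow, e3]; linarith
    exact (pow_left_inj₀ (by positivity) (by norm_num) (by norm_num)).1 this
  have h11 : (3 * d + 2) ≠ 0 := by positivity
  have h12 : 3 * d = 2 * √3 := by
    have : d * √3 * √3 = 2 * √3 := by rw [h10]
    nlinarith
  have : ((1 + d) * t - 1) = (√3 - 1) / 3 := by
    apply mul_right_cancel₀ h11
    rw [h6]
    rw [h12]
    nlinarith
  rw [this]; ring

lemma val3 : V1 (exp (-2 * π / √3)) = (√3 - 1) / 24 := by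
  have s3 : 0 < √(3:ℝ) := by positivity
  have e3 : √(3:ℝ) ^ 2 = 3 := Real.sq_sqrt (by norm_num)
  have hpos : 0 < 1 / (2 * √(3:ℝ)) := by positivity
  have h0 := qq_pos (1 / (2 * √(3:ℝ)))
  have h1 := qq_lt_one hpos
  have eq2 : exp (-2 * π / √3) = qq (1 / (2 * √3)) ^ 2 := by
    rw [qq_pow]; unfold qq; congr 1; push_cast; field_simp
  have f := fricke hpos
  have e' : qq (1 / (6 * (1 / (2 * √(3:ℝ))))) = qq (1 / (2 * √3)) ^ 2 := by
    rw [qq_pow]; congr 1; push_cast; field_simp; linarith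
  rw [e'] at f
  rw [eq2]
  generalize qq (1 / (2 * √(3:ℝ))) = q at *
  have hq : |q| < 1 := by rwa [abs_of_pos h0]
  have hq' : |-q| < 1 := by rwa [abs_neg]
  have hq2 : |q ^ 2| < 1 := abs_pow_lt hq (by norm_num)
  have vp := V1_pos h0 h1
  have b1 := one_add_V hq h0.ne'
  have b2 := one_add_V hq2 (by positivity)
  have bm := one_add_V hq' (by linarith)
  have n1 := EE_neg hq
  have n3 := E_neg_odd hq
  have v1 := V1_eq hq
  have v2 := V1_eq hq2
  have vm := V1_eq hq'
  have p1 := EE_pos hq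
  have pm1 := EE_pos hq'
  have pm3 := EE_pos (abs_pow_lt hq' (n := 3) (by norm_num))
  have p2 := EE_pos (abs_pow_lt hq (n := 2) (by norm_num))
  have p3 := EE_pos (abs_pow_lt hq (n := 3) (by norm_num))
  have p4 := EE_pos (abs_pow_lt hq (n := 4) (by norm_num))
  have p6 := EE_pos (abs_pow_lt hq (n := 6) (by norm_num))
  have p12 := EE_pos (abs_pow_lt hq (n := 12) (by norm_num))
  simp only [← pow_mul, (show Even 2 by decide).neg_pow, (show Even 6 by decide).neg_pow,
    Nat.reduceMul] at b1 b2 bm v1 v2 vm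
  generalize V1 q = x at *
  generalize V1 (q ^ 2) = y at *
  generalize V1 (-q) = z at *
  generalize EE q = e1 at *
  generalize EE (-q) = m1 at *
  generalize EE ((-q) ^ 3) = m3 at *
  generalize EE (q ^ 2) = e2 at *
  generalize EE (q ^ 3) = e3 at *
  generalize EE (q ^ 4) = e4 at *
  generalize EE (q ^ 6) = e6 at *
  generalize EE (q ^ 12) = e12 at *
  have n1' : m1 = e2 ^ 3 / (e1 * e4) := by rw [← n1]; field_simp
  have n3' : m3 = e6 ^ 3 / (e3 * e12) := by rw [← n3]; field_simp
  let s := e3 ^ 4 * e2 ^ 2 / (e6 ^ 2 * e1 ^ 4)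
  let t := m3 ^ 4 * e2 ^ 2 / (e6 ^ 2 * m1 ^ 4)
  have hsp : 0 < s := by positivity
  have htp : 0 < t := by positivity
  have hs2 : 1 + 8 * x = s ^ 2 := by rw [b1]; simp only [s]; field_simp
  have ht2 : 1 + 8 * z = t ^ 2 := by rw [bm]; simp only [t]; field_simp
  have hst : 1 + 8 * y = s * t := by
    rw [b2]; simp only [s, t]; rw [n1', n3']; field_simp
  have hxz : x * z = - (y * (s * t)) := by
    rw [v1, v2, vm]; simp only [s, t]; rw [n1', n3']; field_simp
  have hs : 1 < s := by nlinarith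
  have := alg3 hs htp
    (by rw [← hs2, ← ht2, ← hst] ; rw [← hst] at hxz; linear_combination 64 * hxz)
    (by rw [← hs2, ← hst]; linear_combination 64 * f)
  rw [← this, ← hst]; ring

lemma TH_phi {q : ℝ} (hq : |q| < 1) (h0 : q ≠ 0) : TH (q ^ 2) q = EE q ^ 2 / EE (q ^ 2) := by
  have p2 := (EE_pos (abs_pow_lt hq (n := 2) (by norm_num))).ne'
  have h := QP_split2 q hq
  rw [← EE_eq, show q * q = q ^ 2 by ring, ← EE_eq] at h
  unfold TH
  rw [show q ^ 2 / q = q by field_simp, h]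
  generalize EE (q ^ 2) = a at *
  generalize QP q (q ^ 2) = b at *
  field_simp

lemma TH_om {r : ℝ} (hr : |r| < 1) (h0 : r ≠ 0) :
    TH (r ^ 6) r = EE r * EE (r ^ 6) ^ 2 / (EE (r ^ 2) * EE (r ^ 3)) := by
  have hr2 := abs_pow_lt hr (n := 2) (by norm_num)
  have hr3 := abs_pow_lt hr (n := 3) (by norm_num)
  have p2 := (EE_pos hr2).ne'
  have p3 := (EE_pos hr3).ne'
  have p6 := (EE_pos (abs_pow_lt hr (n := 6) (by norm_num))).ne'
  have h := QP_split2 r hr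
  have k := QP_split2 (r ^ 3) hr3
  have l := QP_split3 r hr2
  rw [← EE_eq, show r * r = r ^ 2 by ring, ← EE_eq] at h
  rw [← EE_eq, show r ^ 3 * r ^ 3 = (r ^ 3) ^ 2 by ring, ← EE_eq, ← pow_mul] at k
  rw [show r * r ^ 2 = r ^ 3 by ring, show r * (r ^ 2) ^ 2 = r ^ 5 by ring, ← pow_mul] at l
  norm_num at k l
  unfold TH
  rw [show r ^ 6 / r = r ^ 5 by field_simp, h, l]
  generalize EE (r ^ 2) = a at *
  generalize EE (r ^ 3) = b at *
  generalize EE (r ^ 6) = c at *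
  generalize QP r (r ^ 6) = d at *
  generalize QP (r ^ 5) (r ^ 6) = e at *
  rw [k] at p3 ⊢
  generalize QP (r ^ 3) (r ^ 6) = f at *
  have : f ≠ 0 := left_ne_zero_of_mul p3
  field_simp

lemma zt {q : ℝ} (h0 : q ≠ 0) (a b : ℕ) (m : ℤ) :
    (-(q ^ a)) ^ m * (q ^ b) ^ TT m = (-1) ^ m * q ^ (a * m + b * TT m) := by
  rw [neg_eq_neg_one_mul, mul_zpow, zpow_add₀ h0, zpow_mul, zpow_mul, zpow_natCast, zpow_natCast]
  ring

lemma dissect {q : ℝ} (hq : |q| < 1) (h0 : q ≠ 0) :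
    TH (q ^ 2) q = TH (q ^ 18) (q ^ 9) - 2 * q * TH (q ^ 18) (q ^ 3) := by
  have q18 := abs_pow_lt hq (n := 18) (by norm_num)
  have z18 : q ^ 18 ≠ 0 := pow_ne_zero _ h0
  have H := jtp (abs_pow_lt hq (n := 2) (by norm_num)) (pow_ne_zero 2 h0) h0
  have H0 := jtp q18 z18 (pow_ne_zero 9 h0)
  have H1 := (jtp q18 z18 (pow_ne_zero 15 h0)).mul_left (-q)
  have H2 := (jtp q18 z18 (pow_ne_zero 3 h0)).mul_left (-q)
  have H2' := (Equiv.addRight (1 : ℤ)).hasSum_iff.2 H2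
  have R : TH (q ^ 18) (q ^ 15) = TH (q ^ 18) (q ^ 3) := by
    rw [← TH_refl (pow_ne_zero 3 h0) z18]
    congr 1
    field_simp
  rw [R] at H1
  have e1 : ∀ j : ℤ, (-q) ^ j * (q ^ 2) ^ TT j = (-1) ^ j * q ^ (j ^ 2) := fun j => by
    have := zt h0 1 2 j
    rw [pow_one] at this
    rw [this]
    congr 2
    have := two_TT j
    push_cast
    linear_combination this
  have K := ((Equiv.prodComm (Fin 3) ℤ).trans (Int.divModEquiv 3).symm).hasSum_iff.2 H
  have fib : ∀ r : Fin 3, HasSum (fun m : ℤ => ((fun j : ℤ => (-q) ^ j * (q ^ 2) ^ TT j) ∘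
      ((Equiv.prodComm (Fin 3) ℤ).trans (Int.divModEquiv 3).symm)) (r, m))
      (![TH (q ^ 18) (q ^ 9), -q * TH (q ^ 18) (q ^ 3), -q * TH (q ^ 18) (q ^ 3)] r) := by
    intro r
    fin_cases r
    · refine hs_congr H0 fun m => ?_
      simp only [Function.comp, e1, zt h0]
      simp [Int.divModEquiv]
      have : (-1 : ℝ) ^ (m * 3) = (-1) ^ m := by
        rw [mul_comm, zpow_mul]; norm_num
      rw [this]
      congr 2
      have := two_TT m
      linear_combination -9 * this
    · refine hs_congr H1 fun m => ?_
      simp only [Function.comp, e1, zt h0]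
      simp [Int.divModEquiv]
      have : (-1 : ℝ) ^ (m * 3 + 1) = - (-1) ^ m := by
        rw [mul_comm, zpow_add₀ (by norm_num), zpow_mul]; norm_num
      rw [this]
      have : q * ((-1) ^ m * q ^ (15 * m + 18 * TT m)) = (-1) ^ m * q ^ (15 * m + 18 * TT m + 1) := by
        rw [zpow_add_one₀ h0]; ring
      rw [this, neg_mul]
      congr 3
      have := two_TT m
      linear_combination -9 * this
    · refine hs_congr H2' fun m => ?_
      simp only [Function.comp, e1, zt h0]
      simp [Int.divModEquiv]
      have : (-1 : ℝ) ^ (m * 3 + 2) = (-1) ^ m := by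
        rw [mul_comm, zpow_add₀ (by norm_num), zpow_mul]; norm_num
      rw [this]
      have : q * ((-1) ^ (m + 1) * q ^ (3 * (m + 1) + 18 * TT (m + 1))) =
          - ((-1) ^ m * q ^ (3 * (m + 1) + 18 * TT (m + 1) + 1)) := by
        rw [zpow_add_one₀ h0, zpow_add_one₀ (by norm_num : (-1 : ℝ) ≠ 0)]; ring
      rw [this, neg_neg]
      congr 2
      have := two_TT (m + 1)
      linear_combination -9 * this
  have L := K.prod_fiberwise fib
  have := L.unique (hasSum_fintype _)
  rw [this, Fin.sum_univ_three]
  simp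
  ring

lemma alg2 {w x y : ℝ} (hw : 0 < w) (hw2 : 0 < 1 - 2 * w) (hy : y = w ^ 3 * (1 + 8 * y))
    (hxy : (1 + 8 * x) * (1 + 8 * y) * (1 - 2 * w) ^ 4 = 1) (f : x * y = 1 / 72) :
    y = (√6 - 2) / 36 := by
  have e6 : √(6:ℝ) ^ 2 = 6 := Real.sq_sqrt (by norm_num)
  have p6 : 0 < √(6:ℝ) := by positivity
  have h8 : 0 < 1 - 8 * w ^ 3 := by
    have : 1 - 8 * w ^ 3 = (1 - 2 * w) * (1 + 2 * w + 4 * w ^ 2) := by ring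
    rw [this]; positivity
  have hy1 : y * (1 - 8 * w ^ 3) = w ^ 3 := by linear_combination hy
  have hy2 : (1 + 8 * y) * (1 - 8 * w ^ 3) = 1 := by linear_combination 8 * hy1
  have hx1 : (1 + 8 * x) * (1 - 2 * w) ^ 4 = 1 - 8 * w ^ 3 := by
    linear_combination (1 - 8 * w ^ 3) * hxy - (1 + 8 * x) * (1 - 2 * w) ^ 4 * hy2
  have hx2 : x * (1 - 2 * w) ^ 3 = w * (1 - w + w ^ 2) := by
    apply mul_right_cancel₀ hw2.ne'
    linear_combination hx1 / 8
  obtain ⟨k, hk⟩ : ∃ k, w * (k + 2) = 1 := ⟨1 / w - 2, by field_simp; ring⟩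
  have hkw : w * k = 1 - 2 * w := by linarith
  have hkp : 0 < k := by
    by_contra h
    push Not at h
    nlinarith
  have hw' : w = 1 / (k + 2) := by field_simp; linarith
  have main : 72 * (w * (1 - w + w ^ 2)) * w ^ 3 = (1 - 2 * w) ^ 3 * (1 - 8 * w ^ 3) := by
    linear_combination 72 * (1 - 2 * w) ^ 3 * (1 - 8 * w ^ 3) * f - 72 * w ^ 3 * hx2 -
      72 * x * (1 - 2 * w) ^ 3 * hy1
  have main2 : (k ^ 2 - 6) * (k ^ 4 + 6 * k ^ 3 + 18 * k ^ 2 + 36 * k + 36) = 0 := by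
    rw [hw'] at main
    field_simp at main
    linear_combination -main
  have hk6 : k ^ 2 = √6 ^ 2 := by
    rw [e6]
    rcases mul_eq_zero.1 main2 with h | h
    · linarith
    · have : 0 < k ^ 4 + 6 * k ^ 3 + 18 * k ^ 2 + 36 * k + 36 := by positivity
      linarith
  have hk7 : k = √6 := (pow_left_inj₀ hkp.le p6.le (by norm_num)).1 hk6
  apply mul_right_cancel₀ h8.ne'
  rw [hy1, hw', hk7]
  field_simp
  generalize √(6:ℝ) = u at *
  have u3 : u ^ 3 = 6 * u := by rw [pow_succ, e6]
  have u4 : u ^ 4 = 36 := by rw [show u ^ 4 = (u ^ 2) ^ 2 by ring, e6]; norm_num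
  ring_nf
  simp only [u3, u4]
  ring

lemma val2 : V1 (exp (-2 * π / √2)) = (√6 - 2) / 36 := by
  have s2 : 0 < √(2:ℝ) := by positivity
  have e2 : √(2:ℝ) ^ 2 = 2 := Real.sq_sqrt (by norm_num)
  have hpos : 0 < 1 / (3 * √(2:ℝ)) := by positivity
  have h0 := qq_pos (1 / (3 * √(2:ℝ)))
  have h1 := qq_lt_one hpos
  have eq2 : exp (-2 * π / √2) = qq (1 / (3 * √2)) ^ 3 := by
    rw [qq_pow]; unfold qq; congr 1; push_cast; field_simp
  have f := fricke hpos
  have e' : qq (1 / (6 * (1 / (3 * √(2:ℝ))))) = qq (1 / (3 * √2)) ^ 3 := by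
    rw [qq_pow]; congr 1; push_cast; field_simp; linarith
  rw [e'] at f
  rw [eq2]
  generalize qq (1 / (3 * √(2:ℝ))) = q at *
  have hq : |q| < 1 := by rwa [abs_of_pos h0]
  have hq3 : |q ^ 3| < 1 := abs_pow_lt hq (by norm_num)
  have b1 := one_add_V hq h0.ne'
  have b3 := one_add_V hq3 (by positivity)
  have v3 := V1_eq hq3
  have D := dissect hq h0.ne'
  have P1 := TH_phi hq h0.ne'
  have P9 := TH_phi (abs_pow_lt hq (n := 9) (by norm_num)) (pow_ne_zero 9 h0.ne')
  have P3 := TH_om hq3 (pow_ne_zero 3 h0.ne')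
  have p1 := EE_pos hq
  have p2 := EE_pos (abs_pow_lt hq (n := 2) (by norm_num))
  have p3 := EE_pos (abs_pow_lt hq (n := 3) (by norm_num))
  have p6 := EE_pos (abs_pow_lt hq (n := 6) (by norm_num))
  have p9 := EE_pos (abs_pow_lt hq (n := 9) (by norm_num))
  have p18 := EE_pos (abs_pow_lt hq (n := 18) (by norm_num))
  simp only [← pow_mul, Nat.reduceMul] at b1 b3 v3 P9 P3
  rw [P1, P9, P3] at D
  generalize V1 q = x at *
  generalize V1 (q ^ 3) = y at *
  generalize EE q = e1 at *
  generalize EE (q ^ 2) = e2 at *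
  generalize EE (q ^ 3) = e3 at *
  generalize EE (q ^ 6) = e6 at *
  generalize EE (q ^ 9) = e9 at *
  generalize EE (q ^ 18) = e18 at *
  have hD : (1 - 2 * (q * e3 * e18 ^ 3 / (e6 * e9 ^ 3))) = (e1 ^ 2 / e2) * (e18 / e9 ^ 2) := by
    rw [D]; field_simp
  refine alg2 (w := q * e3 * e18 ^ 3 / (e6 * e9 ^ 3)) (x := x) (by positivity)
    (by rw [hD]; positivity) ?_ ?_ f
  · rw [b3, v3]; field_simp
  · rw [hD, b1, b3]; field_simp

theorem stmt_1 :
    (∀ q : ℝ, 0 < q → q < 1 → (∫ t in (0:ℝ)..q, U1 t) = V1 q) ∧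
    V1 (Real.exp (-2 * Real.pi / Real.sqrt 6)) = Real.sqrt 2 / 12 ∧
    V1 (Real.exp (-2 * Real.pi / Real.sqrt 3)) = (Real.sqrt 3 - 1) / 24 ∧
    V1 (Real.exp (-2 * Real.pi / Real.sqrt 2)) = (Real.sqrt 6 - 2) / 36 := by
  exact ⟨fun q h0 h1 => integral_U1 h0 h1, val6, val3, val2⟩
end
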